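/- Let X be a coded shift with unique representation G = {g_1, g_2, …}. If φ ∈ FSSP(X), then P_top(X,φ) = lim_{m→∞} P_top(X_m, φ|_{X_m}). -/

import Mathlib

open Filter MeasureTheory Topology
open scoped BigOperators ENNReal

noncomputable section

namespace PaperStmt

/-- The full two-sided shift: bi-infinite sequences over the alphabet `Fin d`. -/
abbrev FullShift (d : ℕ) := ℤ → Fin d

/-- The (left) shift map `f(x)_k = x_{k+1}`. -/
def shift (d : ℕ) : FullShift d → FullShift d := fun x k => x (k + 1)

/-- A (two-sided) shift space: a nonempty closed shift-invariant subset. -/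
def IsShiftSpace {d : ℕ} (X : Set (FullShift d)) : Prop :=
  X.Nonempty ∧ IsClosed X ∧ shift d '' X = X

/-- The cylinder at position `0` determined by a word `w` of length `n`. -/
def cyl {d n : ℕ} (w : Fin n → Fin d) : Set (FullShift d) :=
  {x | ∀ i : Fin n, x ((i : ℕ) : ℤ) = w i}

/-- The language of `X` in length `n`: words of length `n` occurring in elements of `X`
(at position `0`; for shift-invariant `X` this is occurrence anywhere). -/
def langSet {d : ℕ} (X : Set (FullShift d)) (n : ℕ) : Set (Fin n → Fin d) :=
  {w | (X ∩ cyl w).Nonempty}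

/-- Birkhoff sum `S_n φ`. -/
def birkhoff {d : ℕ} (φ : FullShift d → ℝ) (n : ℕ) (x : FullShift d) : ℝ :=
  ∑ k ∈ Finset.range n, φ ((shift d)^[k] x)

open Classical in
/-- The `n`-th partition function `Z_n(φ)` of `X`. -/
def Zfun {d : ℕ} (X : Set (FullShift d)) (φ : FullShift d → ℝ) (n : ℕ) : ℝ :=
  ∑ w : Fin n → Fin d,
    if (X ∩ cyl w).Nonempty then Real.exp (sSup (birkhoff φ n '' (X ∩ cyl w))) else 0

/-- Topological pressure `P_top(X,φ) = lim (1/n) log Z_n(φ) = inf_n (1/n) log Z_n(φ)`. -/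
def pressure {d : ℕ} (X : Set (FullShift d)) (φ : FullShift d → ℝ) : ℝ :=
  ⨅ n : ℕ, (1 / (n + 1 : ℝ)) * Real.log (Zfun X φ (n + 1))

/-- Topological entropy `h_top(X) = inf_n (1/n) log |L(X,n)|`. -/
def entTop {d : ℕ} (X : Set (FullShift d)) : ℝ :=
  ⨅ n : ℕ, (1 / (n + 1 : ℝ)) * Real.log ((langSet X (n + 1)).ncard : ℝ)

/-- The shift-invariant Borel probability measures giving `X` full measure. -/
def InvProb {d : ℕ} (X : Set (FullShift d)) : Set (Measure (FullShift d)) :=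
  {μ | IsProbabilityMeasure μ ∧ μ.map (shift d) = μ ∧ μ X = 1}

/-- Measure-theoretic (Kolmogorov–Sinai) entropy of an invariant measure,
computed via cylinder sets: `h_μ = lim -(1/n) Σ_{|w|=n} μ[w] log μ[w]`. -/
def mEnt {d : ℕ} (μ : Measure (FullShift d)) : ℝ :=
  Filter.liminf
    (fun n : ℕ => (1 / (n + 1 : ℝ)) *
      ∑ w : Fin (n + 1) → Fin d, Real.negMulLog (μ (cyl w)).toReal)
    Filter.atTop

/-- The free energy `h_μ(f) + ∫ φ dμ` of an invariant measure. -/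
def freeEnergy {d : ℕ} (μ : Measure (FullShift d)) (φ : FullShift d → ℝ) : ℝ :=
  mEnt μ + ∫ x, φ x ∂μ

/-- `sup { ∫ φ dμ : μ ∈ M_X }`. -/
def intAvg {d : ℕ} (X : Set (FullShift d)) (φ : FullShift d → ℝ) : ℝ :=
  sSup {r | ∃ μ ∈ InvProb X, r = ∫ x, φ x ∂μ}

/-- `μ` is an equilibrium state of `φ` on `X`. -/
def IsEqState {d : ℕ} (X : Set (FullShift d)) (φ : FullShift d → ℝ)
    (μ : Measure (FullShift d)) : Prop :=
  μ ∈ InvProb X ∧ freeEnergy μ φ = pressure X φ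

/-- `p : ℤ → ℤ` parses `x` into consecutive generator blocks from `𝒢`:
the block of `x` from `p j` to `p (j+1) - 1` is a generator, for every `j`. -/
def IsParsing {d : ℕ} (𝒢 : Set (List (Fin d))) (x : FullShift d) (p : ℤ → ℤ) : Prop :=
  StrictMono p ∧ ∀ j : ℤ, ∃ g ∈ 𝒢,
    p (j + 1) = p j + g.length ∧ ∀ (l : ℕ) (hl : l < g.length), x (p j + l) = g[l]

/-- `X_seq`: the set of bi-infinite concatenations of generators. -/
def Xseq {d : ℕ} (𝒢 : Set (List (Fin d))) : Set (FullShift d) :=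
  {x | ∃ p : ℤ → ℤ, IsParsing 𝒢 x p}

/-- The coded shift generated by `𝒢`: the closure of `X_seq`. -/
def codedShift {d : ℕ} (𝒢 : Set (List (Fin d))) : Set (FullShift d) :=
  closure (Xseq 𝒢)

/-- `𝒢` is a unique representation: every `x ∈ X_seq` admits exactly one parsing
into generator blocks (i.e. the set of cut points is uniquely determined). -/
def UniqueRep {d : ℕ} (𝒢 : Set (List (Fin d))) : Prop :=
  ∀ (x : FullShift d) (p q : ℤ → ℤ),
    IsParsing 𝒢 x p → IsParsing 𝒢 x q → Set.range p = Set.range q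

/-- `P_seq(φ) = sup { h_μ + ∫φ dμ : μ ∈ M_X, μ(Xs) = 1 }`. -/
def PseqOf {d : ℕ} (X Xs : Set (FullShift d)) (φ : FullShift d → ℝ) : ℝ :=
  sSup {r | ∃ μ ∈ InvProb X, μ Xs = 1 ∧ r = freeEnergy μ φ}

/-- `P_lim(φ) = sup { h_μ + ∫φ dμ : μ ∈ M_X, μ(X \ Xs) = 1 }`. -/
def PlimOf {d : ℕ} (X Xs : Set (FullShift d)) (φ : FullShift d → ℝ) : ℝ :=
  sSup {r | ∃ μ ∈ InvProb X, μ (X \ Xs) = 1 ∧ r = freeEnergy μ φ}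

/-- `φ` has strict full sequential pressure: `P_seq(φ) > P_lim(φ)`. -/
def StrictFSP {d : ℕ} (X Xs : Set (FullShift d)) (φ : FullShift d → ℝ) : Prop :=
  PlimOf X Xs φ < PseqOf X Xs φ

/-- `φ ∈ FSSP(X)`: `φ` lies in the sup-norm closure (within `C(X,ℝ)`) of the
set of continuous potentials with strict full sequential pressure. -/
def InFSSP {d : ℕ} (X Xs : Set (FullShift d)) (φ : FullShift d → ℝ) : Prop :=
  ∀ ε : ℝ, 0 < ε → ∃ ψ : FullShift d → ℝ, ContinuousOn ψ X ∧
    (∀ x ∈ X, |φ x - ψ x| ≤ ε) ∧ StrictFSP X Xs ψ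

/-- The invariant probability measure equidistributed on the (period-`ℓ`) orbit of `y`. -/
def periodicMeasure {d : ℕ} (y : FullShift d) (ℓ : ℕ) : Measure (FullShift d) :=
  (ℓ : ℝ≥0∞)⁻¹ • ∑ k ∈ Finset.range ℓ, Measure.dirac ((shift d)^[k] y)

/-- `y` is periodic with period `ℓ ≥ 1`. -/
def IsPeriodicOf {d : ℕ} (y : FullShift d) (ℓ : ℕ) : Prop :=
  1 ≤ ℓ ∧ (shift d)^[ℓ] y = y

/-!
By sup-norm continuity of the pressure it suffices to treat a continuous `ψ` with
`P_lim(ψ) < P_seq(ψ)`. Let `X_m` be generated by the first `m` generators and suppose that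
`P(X_m, ψ) ≤ Q < P(X, ψ)` for all `m`.

An invariant measure on `X_seq` has free energy at most `Q`. Since parsings are unique, the set of
points whose origin lies in one of the first `m` generators is measurable, and its measure tends
to `1`.
A typical word of length `n` thus becomes a concatenation of the first `m` generators, with few
further letters between them, and the partition function of such words, in which each extra letter
is penalised by a factor `exp (-C)`, grows at rate at most `Q + θ`, with `θ → 0` as `C → ∞`.
Taking `C` large first and then `m` large makes both errors small.

In particular `P_seq(ψ) ≤ Q`. The Misiurewicz construction gives an invariant `μ` on `X` with
`P(X, ψ) ≤ H_n(μ) / n + ∫ ψ dμ` for all `n`. It cannot live on `X_seq`, and its normalised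
restriction to `X_seq` has free energy at most `Q`, so the one to the complement has free
energy at least `P(X, ψ)`. Hence `P_seq(ψ) ≤ Q < P(X, ψ) ≤ P_lim(ψ)`, a contradiction.
-/

/-! ### Words, windows and cylinders -/

section Words

variable {d : ℕ}

/-- The words of length `n`, as lists, so that words of different lengths can be concatenated. -/
def words (d n : ℕ) : Finset (List (Fin d)) :=
  Finset.univ.image fun w : Fin n → Fin d => List.ofFn w

/-- The word of length `n` read off `x` from position `a` on. -/
def window (x : FullShift d) (a : ℤ) (n : ℕ) : List (Fin d) :=
  List.ofFn fun i : Fin n => x (a + i)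

/-- The word of length `n` read off `x` from position `0` on, as a function: the index of the
cylinder of length `n` containing `x`. -/
def initialWord (n : ℕ) (x : FullShift d) : Fin n → Fin d := fun i => x ((i : ℕ) : ℤ)

/-- The point reading the word `w` from position `0` on and `z` elsewhere. -/
def fillWord (z : Fin d) (w : List (Fin d)) : FullShift d :=
  fun i => if 0 ≤ i then w.getD i.toNat z else z

lemma mem_words {n : ℕ} {l : List (Fin d)} : l ∈ words d n ↔ l.length = n := by
  simp only [words, Finset.mem_image, Finset.mem_univ, true_and]
  constructor
  · rintro ⟨w, rfl⟩
    exact List.length_ofFn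
  · rintro rfl
    exact ⟨l.get, List.ofFn_get l⟩

lemma sum_words {M : Type*} [AddCommMonoid M] {n : ℕ} (F : List (Fin d) → M) :
    ∑ l ∈ words d n, F l = ∑ w : Fin n → Fin d, F (List.ofFn w) :=
  Finset.sum_image fun _ _ _ _ h => List.ofFn_injective h

lemma sum_words_add {M : Type*} [AddCommMonoid M] (k l : ℕ) (F : List (Fin d) → M) :
    ∑ w ∈ words d (k + l), F w = ∑ u ∈ words d k, ∑ v ∈ words d l, F (u ++ v) := by
  rw [← Finset.sum_product']
  refine (Finset.sum_bij' (fun p _ => p.1 ++ p.2) (fun w _ => (w.take k, w.drop k))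
    ?_ ?_ ?_ ?_ ?_).symm
  · simp +contextual [mem_words]
  · simp +contextual [mem_words]
  · rintro ⟨u, v⟩ h
    have hu : u.length = k := mem_words.1 (Finset.mem_product.1 h).1
    simp [← hu]
  · simp
  · simp

@[simp] lemma length_window (x : FullShift d) (a : ℤ) (n : ℕ) : (window x a n).length = n :=
  List.length_ofFn

lemma window_mem_words (x : FullShift d) (a : ℤ) (n : ℕ) : window x a n ∈ words d n :=
  mem_words.2 (length_window x a n)

@[simp] lemma window_zero (x : FullShift d) (a : ℤ) : window x a 0 = [] := List.ofFn_zero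

lemma window_add (x : FullShift d) (a : ℤ) (k l : ℕ) :
    window x a (k + l) = window x a k ++ window x (a + k) l := by
  simp [window, List.ofFn_add, add_assoc]

lemma drop_window (x : FullShift d) (n j : ℕ) : (window x 0 n).drop j = window x j (n - j) := by
  rcases le_total j n with h | h
  · obtain ⟨l, rfl⟩ := Nat.exists_eq_add_of_le h
    simp [window_add, List.drop_left']
  · simp [Nat.sub_eq_zero_of_le h, h]

lemma shift_iterate (x : FullShift d) (k : ℕ) (i : ℤ) : (shift d)^[k] x i = x (i + k) := by
  induction k generalizing x with
  | zero => simp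
  | succ k ih =>
    rw [Function.iterate_succ_apply, ih, shift]
    push_cast
    ring_nf

lemma window_shift_iterate (x : FullShift d) (k : ℕ) (a : ℤ) (n : ℕ) :
    window ((shift d)^[k] x) a n = window x (a + k) n := by
  simp only [window, shift_iterate, add_right_comm]

lemma window_eq_window_iff (x y : FullShift d) (a b : ℤ) (n : ℕ) :
    window x a n = window y b n ↔ ∀ i : ℕ, i < n → x (a + i) = y (b + i) := by
  rw [window, window, List.ofFn_inj, funext_iff]
  exact ⟨fun h i hi => h ⟨i, hi⟩, fun h i => h i i.2⟩

lemma window_eq_list_iff (x : FullShift d) (a : ℤ) (g : List (Fin d)) :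
    window x a g.length = g ↔ ∀ (l : ℕ) (hl : l < g.length), x (a + l) = g[l] := by
  simp +contextual [window, List.ext_getElem_iff]

lemma window_fillWord (z : Fin d) (w : List (Fin d)) : window (fillWord z w) 0 w.length = w := by
  rw [window_eq_list_iff]
  intro l hl
  simp [fillWord, hl]

lemma ofFn_initialWord (n : ℕ) (x : FullShift d) : List.ofFn (initialWord n x) = window x 0 n := by
  simp only [window, zero_add]
  rfl

lemma cyl_eq_preimage {n : ℕ} (w : Fin n → Fin d) : cyl w = initialWord n ⁻¹' {w} :=
  Set.ext fun _ => funext_iff.symm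

lemma mem_cyl_initialWord (n : ℕ) (x : FullShift d) : x ∈ cyl (initialWord n x) := fun _ => rfl

lemma mem_cyl_iff_window_eq {n : ℕ} (x : FullShift d) (w : Fin n → Fin d) :
    x ∈ cyl w ↔ window x 0 n = List.ofFn w := by
  rw [← ofFn_initialWord, List.ofFn_inj, cyl_eq_preimage, Set.mem_preimage, Set.mem_singleton_iff]

lemma continuous_initialWord (n : ℕ) : Continuous (initialWord (d := d) n) :=
  continuous_pi fun _ => continuous_apply _

lemma continuous_comp_window {E : Type*} [TopologicalSpace E] (n : ℕ) (F : List (Fin d) → E) :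
    Continuous fun x : FullShift d => F (window x 0 n) := by
  simp only [← ofFn_initialWord]
  exact (continuous_of_discreteTopology (f := fun w : Fin n → Fin d => F (List.ofFn w))).comp
    (continuous_initialWord n)

lemma continuous_shift : Continuous (shift d) :=
  continuous_pi fun _ => continuous_apply _

end Words

/-! ### Entropy -/

section FiniteEntropy

lemma sum_negMulLog_add_mul_le_log_sum_exp {ι : Type*} (s : Finset ι) {p : ι → ℝ} (a : ι → ℝ)
    (hp : ∀ i ∈ s, 0 ≤ p i) (hsum : ∑ i ∈ s, p i = 1) :
    ∑ i ∈ s, (Real.negMulLog (p i) + p i * a i) ≤ Real.log (∑ i ∈ s, Real.exp (a i)) := by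
  have hs : s.Nonempty := Finset.nonempty_of_sum_ne_zero (hsum ▸ one_ne_zero)
  set Z := ∑ i ∈ s, Real.exp (a i)
  have hZ : 0 < Z := Finset.sum_pos (fun i _ => Real.exp_pos _) hs
  have hterm : ∀ i ∈ s, Real.negMulLog (p i) + p i * a i ≤
      Real.exp (a i) / Z - p i + p i * Real.log Z := by
    intro i hi
    rcases (hp i hi).eq_or_lt with h | h
    · simpa [← h] using (div_pos (Real.exp_pos (a i)) hZ).le
    · have hlog := Real.log_le_sub_one_of_pos (x := Real.exp (a i) / (Z * p i)) (by positivity)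
      rw [Real.log_div (by positivity) (by positivity), Real.log_exp,
        Real.log_mul hZ.ne' h.ne'] at hlog
      have hmul := mul_le_mul_of_nonneg_left hlog h.le
      have hcancel : p i * (Real.exp (a i) / (Z * p i) - 1) = Real.exp (a i) / Z - p i := by
        field_simp
      rw [Real.negMulLog]
      linarith
  refine (Finset.sum_le_sum hterm).trans_eq ?_
  rw [Finset.sum_add_distrib, Finset.sum_sub_distrib, ← Finset.sum_div, ← Finset.sum_mul, hsum,
    div_self hZ.ne', sub_self, zero_add, one_mul]

lemma sum_negMulLog_gibbs_add {ι : Type*} {s : Finset ι} (hs : s.Nonempty) (a : ι → ℝ) :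
    ∑ i ∈ s, Real.negMulLog (Real.exp (a i) / ∑ j ∈ s, Real.exp (a j)) +
      ∑ i ∈ s, Real.exp (a i) / (∑ j ∈ s, Real.exp (a j)) * a i =
      Real.log (∑ j ∈ s, Real.exp (a j)) := by
  set Z := ∑ j ∈ s, Real.exp (a j) with hZ
  have hZ0 : 0 < Z := Finset.sum_pos (fun i _ => Real.exp_pos _) hs
  have hterm : ∀ i, Real.negMulLog (Real.exp (a i) / Z) + Real.exp (a i) / Z * a i =
      Real.exp (a i) / Z * Real.log Z := by
    intro i
    rw [Real.negMulLog, Real.log_div (Real.exp_pos _).ne' hZ0.ne', Real.log_exp]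
    ring
  rw [← Finset.sum_add_distrib, Finset.sum_congr rfl fun i _ => hterm i, ← Finset.sum_mul,
    ← Finset.sum_div, ← hZ, div_self hZ0.ne', one_mul]

lemma negMulLog_add_le {p q : ℝ} (hp : 0 ≤ p) (hq : 0 ≤ q) :
    Real.negMulLog (p + q) ≤ Real.negMulLog p + Real.negMulLog q := by
  rcases hp.eq_or_lt with rfl | hp
  · simp
  rcases hq.eq_or_lt with rfl | hq
  · simp
  have hlogp := Real.log_le_log hp (le_add_of_nonneg_right hq.le)
  have hlogq := Real.log_le_log hq (le_add_of_nonneg_left hp.le)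
  simp only [Real.negMulLog]
  nlinarith

end FiniteEntropy

section BlockEntropy

variable {d : ℕ}

/-- The entropy of the partition into cylinders of length `n`. -/
def blockEnt (μ : Measure (FullShift d)) (n : ℕ) : ℝ :=
  ∑ w : Fin n → Fin d, Real.negMulLog (μ.real (cyl w))

lemma integrable_of_continuous {X : Type*} [TopologicalSpace X] [CompactSpace X]
    [MeasurableSpace X] [OpensMeasurableSpace X] {μ : Measure X} [IsFiniteMeasure μ] {ψ : X → ℝ}
    (hψ : Continuous ψ) : Integrable ψ μ :=
  hψ.integrable_of_hasCompactSupport (HasCompactSupport.of_compactSpace ψ)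

lemma integral_comp_window {μ : Measure (FullShift d)} [IsFiniteMeasure μ] (n : ℕ)
    (F : List (Fin d) → ℝ) :
    ∫ x, F (window x 0 n) ∂μ = ∑ w : Fin n → Fin d, μ.real (cyl w) * F (List.ofFn w) := by
  have hmeas := (continuous_initialWord (d := d) n).measurable
  simp_rw [← ofFn_initialWord]
  rw [← integral_map (f := fun w => F (List.ofFn w)) hmeas.aemeasurable
    (measurable_of_finite _).aestronglyMeasurable, integral_fintype .of_finite]
  simp_rw [map_measureReal_apply hmeas (measurableSet_singleton _), ← cyl_eq_preimage, smul_eq_mul]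

variable {μ : Measure (FullShift d)} [IsProbabilityMeasure μ]

lemma sum_real_cyl (n : ℕ) : ∑ w : Fin n → Fin d, μ.real (cyl w) = 1 := by
  simpa using (integral_comp_window (μ := μ) n fun _ => 1).symm

lemma blockEnt_add_integral_le (n : ℕ) (a : List (Fin d) → ℝ) :
    blockEnt μ n + ∫ x, a (window x 0 n) ∂μ ≤ Real.log (∑ w ∈ words d n, Real.exp (a w)) := by
  rw [integral_comp_window, sum_words, blockEnt, ← Finset.sum_add_distrib]
  exact sum_negMulLog_add_mul_le_log_sum_exp _ _ (fun _ _ => measureReal_nonneg) (sum_real_cyl n)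

lemma blockEnt_nonneg (n : ℕ) : 0 ≤ blockEnt μ n :=
  Finset.sum_nonneg fun _ _ => Real.negMulLog_nonneg measureReal_nonneg measureReal_le_one

lemma blockEnt_le (n : ℕ) : blockEnt μ n ≤ n * Real.log d := by
  have h := blockEnt_add_integral_le (μ := μ) n fun _ => 0
  rw [sum_words] at h
  simpa using h

lemma blockEnt_div_le (n : ℕ) : blockEnt μ n / n ≤ Real.log d :=
  div_le_of_le_mul₀ n.cast_nonneg (Real.log_natCast_nonneg d)
    (mul_comm (n : ℝ) _ ▸ blockEnt_le n)

lemma mEnt_eq_liminf (μ : Measure (FullShift d)) :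
    mEnt μ = liminf (fun n : ℕ => blockEnt μ n / n) atTop := by
  rw [← liminf_nat_add _ 1]
  simp only [mEnt, blockEnt, Measure.real, one_div, ← div_eq_inv_mul, Nat.cast_succ]

lemma mEnt_le_of_eventually {c : ℝ} (h : ∀ᶠ n : ℕ in atTop, blockEnt μ n / n ≤ c) :
    mEnt μ ≤ c := by
  rw [mEnt_eq_liminf]
  exact liminf_le_of_frequently_le h.frequently
    (isBoundedUnder_of ⟨0, fun n => div_nonneg (blockEnt_nonneg n) n.cast_nonneg⟩)

lemma le_mEnt_of_eventually {c : ℝ} (h : ∀ᶠ n : ℕ in atTop, c ≤ blockEnt μ n / n) :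
    c ≤ mEnt μ := by
  rw [mEnt_eq_liminf]
  exact le_liminf_of_le
    (isBoundedUnder_of ⟨Real.log d, fun n => blockEnt_div_le n⟩).isCoboundedUnder_ge h

lemma blockEnt_convexCombination_le {μ₁ μ₂ : Measure (FullShift d)} [IsProbabilityMeasure μ₁]
    [IsProbabilityMeasure μ₂] {μ : Measure (FullShift d)} {a b : ℝ} (ha : 0 ≤ a) (hb : 0 ≤ b)
    {n : ℕ} (h : ∀ w : Fin n → Fin d,
      μ.real (cyl w) = a * μ₁.real (cyl w) + b * μ₂.real (cyl w)) :
    blockEnt μ n ≤ a * blockEnt μ₁ n + b * blockEnt μ₂ n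
      + (Real.negMulLog a + Real.negMulLog b) := by
  have hterm : ∀ w : Fin n → Fin d, Real.negMulLog (μ.real (cyl w)) ≤
      a * Real.negMulLog (μ₁.real (cyl w)) + b * Real.negMulLog (μ₂.real (cyl w)) +
      (μ₁.real (cyl w) * Real.negMulLog a + μ₂.real (cyl w) * Real.negMulLog b) := by
    intro w
    rw [h]
    refine (negMulLog_add_le (mul_nonneg ha measureReal_nonneg)
      (mul_nonneg hb measureReal_nonneg)).trans_eq ?_
    rw [Real.negMulLog_mul, Real.negMulLog_mul]
    ring
  refine (Finset.sum_le_sum fun w _ => hterm w).trans_eq ?_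
  simp_rw [blockEnt, Finset.sum_add_distrib, ← Finset.mul_sum, ← Finset.sum_mul, sum_real_cyl]
  ring

end BlockEntropy

/-! ### Code lengths -/

section CodeLength

variable {d : ℕ}

/-- Kraft's inequality: `c` is the length, in nats, of an idealized code for the words of length
`q`. Minimizing the expected length over such `c` gives the entropy, so that lower bounds on
`blockEnt` can be tested against functions that are linear in the measure. -/
def IsCodeLength (q : ℕ) (c : List (Fin d) → ℝ) : Prop :=
  ∑ v ∈ words d q, Real.exp (-c v) ≤ 1

/-- The length of the code for arbitrary words obtained by cutting a word into consecutive pieces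
of length `q`, each coded by `c`, and coding the incomplete last piece by `log d` per letter. -/
def blockCodeLength (q : ℕ) (c : List (Fin d) → ℝ) (w : List (Fin d)) : ℝ :=
  if 0 < q ∧ q ≤ w.length then c (w.take q) + blockCodeLength q c (w.drop q)
  else w.length * Real.log d
termination_by w.length
decreasing_by simp; omega

variable {q : ℕ} {c : List (Fin d) → ℝ}

lemma IsCodeLength.nonneg (hc : IsCodeLength q c) {v : List (Fin d)} (hv : v ∈ words d q) :
    0 ≤ c v := by
  have h := (Finset.single_le_sum (f := fun v => Real.exp (-c v))
    (fun _ _ => (Real.exp_pos _).le) hv).trans hc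
  simpa using h

lemma blockCodeLength_of_length_lt {w : List (Fin d)} (hw : w.length < q) :
    blockCodeLength q c w = w.length * Real.log d := by
  rw [blockCodeLength, if_neg (by omega)]

lemma blockCodeLength_append (hq : 0 < q) {u : List (Fin d)} (hu : u.length = q)
    (v : List (Fin d)) : blockCodeLength q c (u ++ v) = c u + blockCodeLength q c v := by
  rw [blockCodeLength, if_pos ⟨hq, by simp [hu]⟩, List.take_left' hu, List.drop_left' hu]

lemma isCodeLength_blockCodeLength (hd : 0 < d) (hq : 0 < q) (hc : IsCodeLength q c) (n : ℕ) :
    IsCodeLength n (blockCodeLength q c) := by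
  induction n using Nat.strong_induction_on with
  | _ n ih =>
    rcases lt_or_ge n q with hn | hn
    · have hshort : ∀ w ∈ words d n, Real.exp (-blockCodeLength q c w) = ((d : ℝ) ^ n)⁻¹ := by
        intro w hw
        have hw := mem_words.1 hw
        rw [blockCodeLength_of_length_lt (hw ▸ hn), hw, Real.exp_neg, ← Real.log_pow,
          Real.exp_log (by positivity)]
      rw [IsCodeLength, Finset.sum_congr rfl hshort, sum_words]
      have : (d : ℝ) ≠ 0 := by positivity
      simp [this]
    · obtain ⟨l, rfl⟩ := Nat.exists_eq_add_of_le hn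
      have hsplit : ∀ u ∈ words d q, ∀ v, Real.exp (-blockCodeLength q c (u ++ v)) =
          Real.exp (-c u) * Real.exp (-blockCodeLength q c v) := by
        intro u hu v
        rw [blockCodeLength_append hq (mem_words.1 hu), neg_add, Real.exp_add]
      rw [IsCodeLength, sum_words_add,
        Finset.sum_congr rfl fun u hu => Finset.sum_congr rfl fun v _ => hsplit u hu v]
      simp_rw [← Finset.mul_sum, ← Finset.sum_mul]
      exact mul_le_one₀ hc (Finset.sum_nonneg fun _ _ => (Real.exp_pos _).le) (ih l (by omega))

lemma sum_exp_blockCodeLength_drop_le (hd : 0 < d) (hq : 0 < q) (hc : IsCodeLength q c)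
    (n j : ℕ) : ∑ w ∈ words d n, Real.exp (-blockCodeLength q c (w.drop j)) ≤ (d : ℝ) ^ j := by
  rcases le_total j n with h | h
  · obtain ⟨l, rfl⟩ := Nat.exists_eq_add_of_le h
    have htail : ∀ u ∈ words d j,
        ∑ v ∈ words d l, Real.exp (-blockCodeLength q c ((u ++ v).drop j)) ≤ 1 := by
      intro u hu
      simp_rw [List.drop_left' (mem_words.1 hu)]
      exact isCodeLength_blockCodeLength hd hq hc l
    rw [sum_words_add]
    refine (Finset.sum_le_sum htail).trans ?_
    rw [sum_words]
    simp
  · have hone : ∀ w ∈ words d n, Real.exp (-blockCodeLength q c (w.drop j)) = 1 := by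
      intro w hw
      rw [List.drop_eq_nil_of_le (by rwa [mem_words.1 hw]),
        blockCodeLength_of_length_lt (by simpa using hq)]
      simp
    rw [Finset.sum_congr rfl hone, sum_words]
    simpa using pow_le_pow_right₀ (by exact_mod_cast hd : (1 : ℝ) ≤ d) h

lemma sum_blockCodeLength_window_le_of_lt (x : FullShift d) {n a : ℕ} (h : n < a + q) :
    ∑ j ∈ Finset.range q, blockCodeLength q c (window x ((a + j : ℕ) : ℤ) (n - (a + j))) ≤
      q * (q * Real.log d) := by
  have hshort : ∀ j ∈ Finset.range q,
      blockCodeLength q c (window x ((a + j : ℕ) : ℤ) (n - (a + j))) ≤ q * Real.log d := by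
    intro j hj
    have hlt : n - (a + j) < q := by
      have := Finset.mem_range.1 hj
      omega
    rw [blockCodeLength_of_length_lt (by simpa using hlt), length_window]
    have := Real.log_natCast_nonneg d
    gcongr
  exact (Finset.sum_le_sum hshort).trans_eq (by simp)

lemma sum_blockCodeLength_window_le (hq : 0 < q) (hc : IsCodeLength q c) (x : FullShift d)
    {n a : ℕ} (ha : a ≤ n) :
    ∑ j ∈ Finset.range q, blockCodeLength q c (window x ((a + j : ℕ) : ℤ) (n - (a + j))) ≤
      ∑ k ∈ Finset.Ico a n, c (window x k q) + q * (q * Real.log d) := by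
  induction ha using Nat.decreasingInduction with
  | self =>
    rw [Finset.Ico_self, Finset.sum_empty, zero_add]
    exact sum_blockCodeLength_window_le_of_lt x (Nat.lt_add_of_pos_right hq)
  | of_succ a ha ih =>
    rcases lt_or_ge n (a + q) with h | h
    · have h0 : 0 ≤ ∑ k ∈ Finset.Ico a n, c (window x k q) :=
        Finset.sum_nonneg fun k _ => hc.nonneg (window_mem_words _ _ _)
      linarith [sum_blockCodeLength_window_le_of_lt (c := c) x h]
    · set L : ℕ → ℝ := fun i => blockCodeLength q c (window x (i : ℤ) (n - i)) with hL
      have hstep : L a = c (window x a q) + L (a + q) := by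
        obtain ⟨l, rfl⟩ := Nat.exists_eq_add_of_le h
        simp only [hL]
        rw [show a + q + l - a = q + l by omega, show a + q + l - (a + q) = l by omega,
          window_add, blockCodeLength_append hq (length_window _ _ _), Nat.cast_add]
      have hshift : ∑ j ∈ Finset.range q, L (a + j) + L (a + q) =
          L a + ∑ j ∈ Finset.range q, L (a + 1 + j) := by
        rw [← Finset.sum_range_succ (fun j => L (a + j)), Finset.sum_range_succ', add_comm]
        simp only [add_zero, add_assoc, add_comm 1]
      change ∑ j ∈ Finset.range q, L (a + 1 + j) ≤ _ at ih
      change ∑ j ∈ Finset.range q, L (a + j) ≤ _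
      rw [Finset.sum_eq_sum_Ico_succ_bot ha]
      linarith

/-- The idealized code with length `-log μ[w]` is optimal, but infinite on null cylinders; mixing
`μ` with the uniform distribution makes it finite at an arbitrarily small cost. -/
lemma le_blockEnt_of_forall_isCodeLength {μ : Measure (FullShift d)} [IsProbabilityMeasure μ]
    {a : ℝ} (h : ∀ c : List (Fin d) → ℝ, IsCodeLength q c → a ≤ ∫ x, c (window x 0 q) ∂μ) :
    a ≤ blockEnt μ q := by
  have hd : (0 : ℝ) < d := by exact_mod_cast Fin.pos (μ.nonempty_of_neZero.some 0)
  refine le_of_forall_pos_le_add fun ε hε => ?_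
  set m : List (Fin d) → ℝ := fun v => μ.real {x | window x 0 q = v}
  have hm0 : ∀ v, 0 ≤ m v := fun v => measureReal_nonneg
  have hmcyl : ∀ w : Fin q → Fin d, m (List.ofFn w) = μ.real (cyl w) := fun w =>
    congrArg μ.real (Set.ext fun x => (mem_cyl_iff_window_eq x w).symm)
  set t := Real.exp (-ε) with ht
  have ht0 : 0 < t := Real.exp_pos _
  have ht1 : 0 < 1 - t := sub_pos.2 (Real.exp_lt_one_iff.2 (neg_neg_of_pos hε))
  set ρ : List (Fin d) → ℝ := fun v => t * m v + (1 - t) * ((d : ℝ) ^ q)⁻¹ with hρ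
  have htm : ∀ v, t * m v < ρ v := fun v => lt_add_of_pos_right _ (by positivity)
  have hρ0 : ∀ v, 0 < ρ v := fun v => (mul_nonneg ht0.le (hm0 v)).trans_lt (htm v)
  have hcode : IsCodeLength q fun v => -Real.log (ρ v) := by
    simp_rw [IsCodeLength, neg_neg, Real.exp_log (hρ0 _), hρ]
    rw [sum_words, Finset.sum_add_distrib, ← Finset.mul_sum]
    simp_rw [hmcyl, sum_real_cyl]
    refine le_of_eq ?_
    simp only [Finset.sum_const, Finset.card_univ, Fintype.card_pi_const, Fintype.card_fin,
      nsmul_eq_mul, Nat.cast_pow]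
    field_simp
    ring
  have hterm : ∀ w : Fin q → Fin d, μ.real (cyl w) * -Real.log (ρ (List.ofFn w)) ≤
      Real.negMulLog (μ.real (cyl w)) + μ.real (cyl w) * ε := by
    intro w
    rw [← hmcyl]
    rcases (hm0 (List.ofFn w)).eq_or_lt with h | h
    · simp [← h]
    · have hlog := Real.log_le_log (mul_pos ht0 h) (htm (List.ofFn w)).le
      rw [Real.log_mul ht0.ne' h.ne', ht, Real.log_exp] at hlog
      rw [Real.negMulLog]
      nlinarith
  calc a ≤ ∑ w : Fin q → Fin d, μ.real (cyl w) * -Real.log (ρ (List.ofFn w)) :=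
        (h _ hcode).trans_eq (integral_comp_window q fun v => -Real.log (ρ v))
    _ ≤ ∑ w : Fin q → Fin d, (Real.negMulLog (μ.real (cyl w)) + μ.real (cyl w) * ε) :=
        Finset.sum_le_sum fun w _ => hterm w
    _ = blockEnt μ q + ε := by
        rw [Finset.sum_add_distrib, ← Finset.sum_mul, sum_real_cyl, one_mul, blockEnt]

end CodeLength

/-! ### Pressure -/

section Pressure

variable {d : ℕ}

lemma exists_abs_le_of_continuous {X : Type*} [TopologicalSpace X] [CompactSpace X] {ψ : X → ℝ}
    (hψ : Continuous ψ) : ∃ K, ∀ x, |ψ x| ≤ K := by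
  obtain ⟨K, hK⟩ := isCompact_univ.exists_bound_of_continuousOn hψ.continuousOn
  exact ⟨K, fun x => hK x (Set.mem_univ x)⟩

lemma abs_birkhoff_le {ψ : FullShift d → ℝ} {K : ℝ} (hK : ∀ x, |ψ x| ≤ K) (n : ℕ)
    (x : FullShift d) : |birkhoff ψ n x| ≤ n * K :=
  (Finset.abs_sum_le_sum_abs _ _).trans <| (Finset.sum_le_sum fun _ _ => hK _).trans_eq <| by simp

lemma bddAbove_birkhoff {ψ : FullShift d → ℝ} {K : ℝ} (hK : ∀ x, |ψ x| ≤ K) (n : ℕ)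
    (S : Set (FullShift d)) : BddAbove (birkhoff ψ n '' S) :=
  ⟨n * K, Set.forall_mem_image.2 fun x _ => (abs_le.1 (abs_birkhoff_le hK n x)).2⟩

lemma birkhoff_le_add {X : Set (FullShift d)} (hX : Set.MapsTo (shift d) X X)
    {φ ψ : FullShift d → ℝ} {ε : ℝ} (h : ∀ x ∈ X, φ x ≤ ψ x + ε) (n : ℕ) {x : FullShift d}
    (hx : x ∈ X) : birkhoff φ n x ≤ birkhoff ψ n x + n * ε := by
  have : ∑ k ∈ Finset.range n, φ ((shift d)^[k] x) ≤
      ∑ k ∈ Finset.range n, (ψ ((shift d)^[k] x) + ε) :=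
    Finset.sum_le_sum fun k _ => h _ (hX.iterate k hx)
  simpa [birkhoff, Finset.sum_add_distrib] using this

open Classical in
/-- The contribution of the word `w` to the partition function `Zfun X ψ w.length`. -/
def wordWeight (X : Set (FullShift d)) (ψ : FullShift d → ℝ) (w : List (Fin d)) : ℝ :=
  if (X ∩ {x | window x 0 w.length = w}).Nonempty then
    Real.exp (sSup (birkhoff ψ w.length '' (X ∩ {x | window x 0 w.length = w}))) else 0

lemma Zfun_eq_sum_wordWeight (X : Set (FullShift d)) (ψ : FullShift d → ℝ) (n : ℕ) :
    Zfun X ψ n = ∑ w ∈ words d n, wordWeight X ψ w := by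
  rw [sum_words, Zfun]
  refine Finset.sum_congr rfl fun w _ => ?_
  have h : {x | window x 0 (List.ofFn w).length = List.ofFn w} = cyl w :=
    Set.ext fun x => by rw [mem_cyl_iff_window_eq, Set.mem_ofPred_eq, List.length_ofFn]
  rw [wordWeight, h, List.length_ofFn]

lemma wordWeight_nonneg (X : Set (FullShift d)) (ψ : FullShift d → ℝ) (w : List (Fin d)) :
    0 ≤ wordWeight X ψ w := by
  unfold wordWeight
  split_ifs <;> positivity

lemma exp_birkhoff_le_wordWeight {X : Set (FullShift d)} {ψ : FullShift d → ℝ} {K : ℝ}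
    (hK : ∀ x, |ψ x| ≤ K) {w : List (Fin d)} {x : FullShift d} (hx : x ∈ X)
    (hxw : window x 0 w.length = w) : Real.exp (birkhoff ψ w.length x) ≤ wordWeight X ψ w := by
  rw [wordWeight, if_pos ⟨x, hx, hxw⟩]
  exact Real.exp_le_exp.2 (le_csSup (bddAbove_birkhoff hK _ _) ⟨x, ⟨hx, hxw⟩, rfl⟩)

lemma wordWeight_le {X : Set (FullShift d)} {ψ : FullShift d → ℝ} {w : List (Fin d)} {B : ℝ}
    (hB : 0 ≤ B)
    (h : ∀ x ∈ X, window x 0 w.length = w → Real.exp (birkhoff ψ w.length x) ≤ B) :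
    wordWeight X ψ w ≤ B := by
  unfold wordWeight
  split_ifs with hne
  · obtain ⟨x, hx, hxw⟩ := hne
    have hBpos : 0 < B := (Real.exp_pos _).trans_le (h x hx hxw)
    rw [← Real.le_log_iff_exp_le hBpos]
    refine csSup_le ⟨_, x, ⟨hx, hxw⟩, rfl⟩ (Set.forall_mem_image.2 fun y hy => ?_)
    exact (Real.le_log_iff_exp_le hBpos).2 (h y hy.1 hy.2)
  · exact hB

lemma Zfun_pos {X : Set (FullShift d)} (hX : X.Nonempty) (ψ : FullShift d → ℝ) (n : ℕ) :
    0 < Zfun X ψ n := by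
  obtain ⟨x, hx⟩ := hX
  refine Finset.sum_pos' (fun w _ => ?_) ⟨initialWord n x, Finset.mem_univ _, ?_⟩
  · split_ifs <;> positivity
  · rw [if_pos ⟨x, hx, mem_cyl_initialWord n x⟩]
    positivity

lemma neg_le_log_Zfun {X : Set (FullShift d)} (hX : X.Nonempty) {ψ : FullShift d → ℝ} {K : ℝ}
    (hK : ∀ x, |ψ x| ≤ K) (n : ℕ) : -(n * K) ≤ Real.log (Zfun X ψ n) := by
  rw [Real.le_log_iff_exp_le (Zfun_pos hX ψ n), Zfun_eq_sum_wordWeight]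
  obtain ⟨x, hx⟩ := hX
  calc Real.exp (-(n * K)) ≤ Real.exp (birkhoff ψ n x) :=
        Real.exp_le_exp.2 (abs_le.1 (abs_birkhoff_le hK n x)).1
    _ ≤ wordWeight X ψ (window x 0 n) := by
        simpa using exp_birkhoff_le_wordWeight hK hx (w := window x 0 n) (by simp)
    _ ≤ ∑ w ∈ words d n, wordWeight X ψ w :=
        Finset.single_le_sum (fun w _ => wordWeight_nonneg X ψ w) (window_mem_words x 0 n)

lemma le_pressure {X : Set (FullShift d)} {ψ : FullShift d → ℝ} {c : ℝ}
    (h : ∀ n : ℕ, 0 < n → n * c ≤ Real.log (Zfun X ψ n)) : c ≤ pressure X ψ := by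
  refine le_ciInf fun n => ?_
  have hn := h (n + 1) n.succ_pos
  rw [one_div, ← div_eq_inv_mul, le_div_iff₀' (by positivity)]
  exact_mod_cast hn

lemma mul_pressure_le_log_Zfun {X : Set (FullShift d)} (hX : X.Nonempty) {ψ : FullShift d → ℝ}
    {K : ℝ} (hK : ∀ x, |ψ x| ≤ K) {n : ℕ} (hn : 0 < n) :
    n * pressure X ψ ≤ Real.log (Zfun X ψ n) := by
  obtain ⟨m, rfl⟩ := Nat.exists_eq_succ_of_ne_zero hn.ne'
  have hb : BddBelow (Set.range fun n : ℕ => (1 / (n + 1 : ℝ)) * Real.log (Zfun X ψ (n + 1))) := by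
    refine ⟨-K, Set.forall_mem_range.2 fun n => ?_⟩
    have := neg_le_log_Zfun hX hK (n + 1)
    rw [one_div, ← div_eq_inv_mul, le_div_iff₀' (by positivity), mul_neg]
    exact_mod_cast this
  have h : pressure X ψ ≤ (1 / (m + 1 : ℝ)) * Real.log (Zfun X ψ (m + 1)) := ciInf_le hb m
  rw [one_div, ← div_eq_inv_mul, le_div_iff₀' (by positivity)] at h
  exact_mod_cast h

lemma pressure_congr {X : Set (FullShift d)} (hX : Set.MapsTo (shift d) X X)
    {φ ψ : FullShift d → ℝ} (h : Set.EqOn φ ψ X) : pressure X φ = pressure X ψ := by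
  have himage : ∀ n (w : Fin n → Fin d),
      birkhoff φ n '' (X ∩ cyl w) = birkhoff ψ n '' (X ∩ cyl w) := fun n w =>
    Set.image_congr fun x hx => Finset.sum_congr rfl fun k _ => h (hX.iterate k hx.1)
  simp only [pressure, Zfun, himage]

lemma pressure_le_add {X Y : Set (FullShift d)} (hXY : X ⊆ Y) (hX : X.Nonempty)
    (hinv : Set.MapsTo (shift d) X X) {φ ψ : FullShift d → ℝ} {K K' ε : ℝ}
    (hφ : ∀ x, |φ x| ≤ K) (hψ : ∀ x, |ψ x| ≤ K') (h : ∀ x ∈ X, φ x ≤ ψ x + ε) :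
    pressure X φ ≤ pressure Y ψ + ε := by
  rw [← sub_le_iff_le_add]
  refine le_pressure fun n hn => ?_
  have hZ : Zfun X φ n ≤ Real.exp (n * ε) * Zfun Y ψ n := by
    rw [Zfun_eq_sum_wordWeight, Zfun_eq_sum_wordWeight, Finset.mul_sum]
    refine Finset.sum_le_sum fun w hw => wordWeight_le
      (mul_nonneg (Real.exp_pos _).le (wordWeight_nonneg _ _ _)) fun x hx hxw => ?_
    calc Real.exp (birkhoff φ w.length x)
        ≤ Real.exp (n * ε) * Real.exp (birkhoff ψ w.length x) := by
          rw [← Real.exp_add, mem_words.1 hw, Real.exp_le_exp, add_comm]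
          exact birkhoff_le_add hinv h n hx
      _ ≤ Real.exp (n * ε) * wordWeight Y ψ w := mul_le_mul_of_nonneg_left
          (exp_birkhoff_le_wordWeight hψ (hXY hx) hxw) (Real.exp_pos _).le
  have hlog := Real.log_le_log (Zfun_pos hX φ n) hZ
  rw [Real.log_mul (Real.exp_pos _).ne' (Zfun_pos (hX.mono hXY) ψ n).ne', Real.log_exp] at hlog
  linarith [mul_pressure_le_log_Zfun hX hφ hn]

lemma Zfun_add_le {X : Set (FullShift d)} (hinv : Set.MapsTo (shift d) X X)
    {ψ : FullShift d → ℝ} {K : ℝ} (hK : ∀ x, |ψ x| ≤ K) (k l : ℕ) :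
    Zfun X ψ (k + l) ≤ Zfun X ψ k * Zfun X ψ l := by
  simp only [Zfun_eq_sum_wordWeight, sum_words_add, Finset.sum_mul_sum]
  refine Finset.sum_le_sum fun u _ => Finset.sum_le_sum fun v _ => wordWeight_le
    (mul_nonneg (wordWeight_nonneg _ _ _) (wordWeight_nonneg _ _ _)) fun x hx hxw => ?_
  rw [List.length_append, window_add] at hxw
  obtain ⟨hu, hv⟩ := List.append_inj hxw (length_window _ _ _)
  have hadd : birkhoff ψ (u ++ v).length x =
      birkhoff ψ u.length x + birkhoff ψ v.length ((shift d)^[u.length] x) := by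
    rw [List.length_append]
    exact birkhoffSum_add _ _ _ _ _
  rw [hadd, Real.exp_add]
  refine mul_le_mul (exp_birkhoff_le_wordWeight hK hx hu)
    (exp_birkhoff_le_wordWeight hK (hinv.iterate _ hx) ?_) (Real.exp_pos _).le
    (wordWeight_nonneg _ _ _)
  rwa [window_shift_iterate]

lemma Zfun_mul_le {X : Set (FullShift d)} (hX : X.Nonempty) (hinv : Set.MapsTo (shift d) X X)
    {ψ : FullShift d → ℝ} {K : ℝ} (hK : ∀ x, |ψ x| ≤ K) (n : ℕ) {r : ℕ} (hr : 0 < r) :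
    Zfun X ψ (n * r) ≤ Zfun X ψ n ^ r := by
  induction r, hr using Nat.le_induction with
  | base => simp
  | succ r _ ih =>
    rw [mul_add, mul_one, pow_succ]
    exact (Zfun_add_le hinv hK _ _).trans (mul_le_mul_of_nonneg_right ih (Zfun_pos hX ψ n).le)

end Pressure

/-! ### Half of the variational principle -/

section OrbitAverage

variable {α : Type*} [MeasurableSpace α]

/-- The measure distributing the weight `r x` of every point `x` of `s` uniformly over the orbit
segment `x, T x, …, T^{n-1} x`. -/
def orbitAverage (T : α → α) (n : ℕ) (s : Finset α) (r : α → ℝ) : Measure α :=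
  ∑ x ∈ s, ∑ k ∈ Finset.range n, ENNReal.ofReal (r x / n) • Measure.dirac (T^[k] x)

variable {T : α → α} {n : ℕ} {s : Finset α} {r : α → ℝ}

lemma integral_orbitAverage (hr : ∀ x ∈ s, 0 ≤ r x) {g : α → ℝ} (hg : StronglyMeasurable g) :
    ∫ x, g x ∂orbitAverage T n s r = (∑ x ∈ s, r x * birkhoffSum T g n x) / n := by
  have hint : ∀ (c : ℝ≥0∞) (x : α), c ≠ ⊤ → Integrable g (c • Measure.dirac x) := fun c x hc =>
    (integrable_dirac' hg ENNReal.coe_lt_top).smul_measure hc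
  rw [orbitAverage, integral_finsetSum_measure fun x _ =>
    integrable_finsetSum_measure.2 fun k _ => hint _ _ ENNReal.ofReal_ne_top, Finset.sum_div]
  refine Finset.sum_congr rfl fun x hx => ?_
  rw [integral_finsetSum_measure fun k _ => hint _ _ ENNReal.ofReal_ne_top]
  simp_rw [integral_smul_measure, integral_dirac' g _ hg,
    ENNReal.toReal_ofReal (div_nonneg (hr x hx) n.cast_nonneg), ← Finset.smul_sum]
  rw [birkhoffSum, smul_eq_mul, div_mul_eq_mul_div]

lemma orbitAverage_apply_eq_one (hn : 0 < n) (hr : ∀ x ∈ s, 0 ≤ r x) (hsum : ∑ x ∈ s, r x = 1)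
    {S : Set α} (hS : Set.MapsTo T S S) (hs : ↑s ⊆ S) : orbitAverage T n s r S = 1 := by
  have hn' : (n : ℝ) ≠ 0 := by positivity
  have hterm : ∀ x ∈ s, (∑ k ∈ Finset.range n,
      ENNReal.ofReal (r x / n) • Measure.dirac (T^[k] x)) S = ENNReal.ofReal (r x) := by
    intro x hx
    simp_rw [Measure.finsetSum_apply, Measure.smul_apply,
      Measure.dirac_apply_of_mem (hS.iterate _ (hs hx))]
    rw [Finset.sum_const, Finset.card_range, smul_eq_mul, mul_one, nsmul_eq_mul,
      ← ENNReal.ofReal_natCast, ← ENNReal.ofReal_mul n.cast_nonneg, mul_div_cancel₀ _ hn']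
  rw [orbitAverage, Measure.finsetSum_apply, Finset.sum_congr rfl hterm,
    ← ENNReal.ofReal_sum_of_nonneg hr, hsum, ENNReal.ofReal_one]

lemma abs_integral_comp_sub_integral_orbitAverage_le (hr : ∀ x ∈ s, 0 ≤ r x)
    (hsum : ∑ x ∈ s, r x = 1) (hT : Measurable T) {g : α → ℝ} (hg : StronglyMeasurable g) {K : ℝ}
    (hK : ∀ x, |g x| ≤ K) :
    |∫ x, g (T x) ∂orbitAverage T n s r - ∫ x, g x ∂orbitAverage T n s r| ≤ 2 * K / n := by
  have hcomp : ∀ x, birkhoffSum T (fun y => g (T y)) n x = birkhoffSum T g n (T x) := fun x =>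
    Finset.sum_congr rfl fun k _ => congrArg g
      ((Function.iterate_succ_apply' T k x).symm.trans (Function.iterate_succ_apply T k x))
  have hgT : StronglyMeasurable fun x => g (T x) := hg.comp_measurable hT
  rw [integral_orbitAverage hr hgT, integral_orbitAverage hr hg, ← sub_div,
    abs_div, Nat.abs_cast, ← Finset.sum_sub_distrib]
  gcongr
  calc |∑ x ∈ s, (r x * birkhoffSum T (fun y => g (T y)) n x - r x * birkhoffSum T g n x)|
      ≤ ∑ x ∈ s, r x * (2 * K) := by
        refine (Finset.abs_sum_le_sum_abs _ _).trans (Finset.sum_le_sum fun x hx => ?_)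
        rw [← mul_sub, hcomp, birkhoffSum_apply_sub_birkhoffSum, abs_mul, abs_of_nonneg (hr x hx),
          two_mul]
        exact mul_le_mul_of_nonneg_left ((abs_sub _ _).trans (add_le_add (hK _) (hK _))) (hr x hx)
    _ = 2 * K := by rw [← Finset.sum_mul, hsum, one_mul]

end OrbitAverage

lemma measurePreserving_of_tendsto {α ι : Type*} [TopologicalSpace α] [MeasurableSpace α]
    [BorelSpace α] [HasOuterApproxClosed α] {T : α → α} (hT : Continuous T) {L : Filter ι}
    [L.NeBot] {ν : ι → ProbabilityMeasure α} {μ : ProbabilityMeasure α} (hν : Tendsto ν L (𝓝 μ))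
    (h : ∀ g : BoundedContinuousFunction α ℝ, Tendsto (fun i =>
      ∫ x, g (T x) ∂(ν i : Measure α) - ∫ x, g x ∂(ν i : Measure α)) L (𝓝 0)) :
    MeasurePreserving T (μ : Measure α) (μ : Measure α) := by
  refine ⟨hT.measurable, ?_⟩
  have : IsProbabilityMeasure ((μ : Measure α).map T) :=
    Measure.isProbabilityMeasure_map hT.measurable.aemeasurable
  have hint := ProbabilityMeasure.tendsto_iff_forall_integral_tendsto.1 hν
  refine ext_of_forall_integral_eq_of_IsFiniteMeasure fun g => ?_
  rw [integral_map hT.measurable.aemeasurable g.continuous.measurable.aestronglyMeasurable]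
  exact sub_eq_zero.1 (tendsto_nhds_unique
    ((hint (g.compContinuous ⟨T, hT⟩)).sub (hint g)) (h g))

section VariationalPrinciple

variable {d : ℕ}

lemma exists_separated_Zfun_le {X : Set (FullShift d)} (hX : X.Nonempty) (ψ : FullShift d → ℝ)
    (n : ℕ) : ∃ s : Finset (FullShift d), s.Nonempty ∧ ↑s ⊆ X ∧
      Set.InjOn (initialWord n) (s : Set (FullShift d)) ∧
      Zfun X ψ n ≤ Real.exp 1 * ∑ x ∈ s, Real.exp (birkhoff ψ n x) := by
  classical
  set W : Finset (Fin n → Fin d) := Finset.univ.filter fun w => (X ∩ cyl w).Nonempty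
  have hchoice : ∀ w ∈ W, ∃ x ∈ X ∩ cyl w,
      sSup (birkhoff ψ n '' (X ∩ cyl w)) ≤ 1 + birkhoff ψ n x := by
    intro w hw
    have hne : (X ∩ cyl w).Nonempty := (Finset.mem_filter.1 hw).2
    obtain ⟨_, ⟨x, hx, rfl⟩, hlt⟩ := exists_lt_of_lt_csSup (hne.image (birkhoff ψ n))
      (sub_one_lt (sSup (birkhoff ψ n '' (X ∩ cyl w))))
    exact ⟨x, hx, by linarith⟩
  have : Nonempty (FullShift d) := ⟨hX.some⟩
  choose! y hyX hy using hchoice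
  have hword : ∀ w ∈ W, initialWord n (y w) = w := fun w hw => funext (hyX w hw).2
  have hinj : Set.InjOn y (W : Set (Fin n → Fin d)) := Set.LeftInvOn.injOn hword
  refine ⟨W.image y, ?_, ?_, ?_, ?_⟩
  · obtain ⟨x, hx⟩ := hX
    exact Finset.Nonempty.image ⟨initialWord n x, Finset.mem_filter.2
      ⟨Finset.mem_univ _, x, hx, mem_cyl_initialWord n x⟩⟩ y
  · rw [Finset.coe_image]
    exact Set.image_subset_iff.2 fun w hw => (hyX w hw).1
  · rw [Finset.coe_image]
    rintro _ ⟨v, hv, rfl⟩ _ ⟨w, hw, rfl⟩ h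
    rw [hword v hv, hword w hw] at h
    rw [h]
  · rw [Finset.sum_image hinj, Finset.mul_sum, Zfun, ← Finset.sum_filter]
    refine Finset.sum_le_sum fun w hw => ?_
    rw [← Real.exp_add]
    exact Real.exp_le_exp.2 (hy w hw)

variable {n q : ℕ} {c : List (Fin d) → ℝ} {s : Finset (FullShift d)} {r : FullShift d → ℝ}

lemma sum_negMulLog_le_blockCodeLength (hd : 0 < d) (hq : 0 < q) (hc : IsCodeLength q c)
    (hs : Set.InjOn (initialWord n) (s : Set (FullShift d))) (hr : ∀ x ∈ s, 0 ≤ r x)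
    (hsum : ∑ x ∈ s, r x = 1) (j : ℕ) : ∑ x ∈ s, Real.negMulLog (r x) ≤
      ∑ x ∈ s, r x * blockCodeLength q c (window x j (n - j)) + j * Real.log d := by
  classical
  have hsne : s.Nonempty := Finset.nonempty_of_sum_ne_zero (hsum ▸ one_ne_zero)
  have hGibbs := sum_negMulLog_add_mul_le_log_sum_exp s
    (fun x => -blockCodeLength q c ((window x 0 n).drop j)) hr hsum
  have hwords : ∑ x ∈ s, Real.exp (-blockCodeLength q c ((window x 0 n).drop j)) ≤ (d : ℝ) ^ j := by
    refine le_trans ?_ (sum_exp_blockCodeLength_drop_le hd hq hc n j)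
    simp_rw [sum_words, ← ofFn_initialWord]
    rw [← Finset.sum_image
      (f := fun w => Real.exp (-blockCodeLength q c ((List.ofFn w).drop j))) hs]
    exact Finset.sum_le_sum_of_subset_of_nonneg (Finset.subset_univ _)
      fun _ _ _ => (Real.exp_pos _).le
  have hlog := Real.log_le_log (Finset.sum_pos (fun _ _ => Real.exp_pos _) hsne) hwords
  rw [Real.log_pow] at hlog
  simp only [drop_window, mul_neg, ← sub_eq_add_neg, Finset.sum_sub_distrib] at hGibbs hlog
  linarith

/-- A code for blocks of length `q` yields codes for words of length `n` by cutting them into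
blocks from each of the offsets `0, …, q - 1`; averaging over the offsets replaces the code length
of the blocks by an orbit average. -/
lemma mul_sum_negMulLog_le_integral_orbitAverage (hd : 0 < d) (hn : 0 < n) (hq : 0 < q)
    (hc : IsCodeLength q c) (hs : Set.InjOn (initialWord n) (s : Set (FullShift d)))
    (hr : ∀ x ∈ s, 0 ≤ r x) (hsum : ∑ x ∈ s, r x = 1) :
    q * ∑ x ∈ s, Real.negMulLog (r x) ≤
      n * ∫ x, c (window x 0 q) ∂orbitAverage (shift d) n s r + 2 * q * (q * Real.log d) := by
  have hbirkhoff : ∀ x, birkhoffSum (shift d) (fun y => c (window y 0 q)) n x =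
      ∑ k ∈ Finset.range n, c (window x k q) := fun x =>
    Finset.sum_congr rfl fun k _ => by simp only [window_shift_iterate, zero_add]
  have hoffset : ∀ j ∈ Finset.range q, ∑ x ∈ s, Real.negMulLog (r x) ≤
      ∑ x ∈ s, r x * blockCodeLength q c (window x j (n - j)) + q * Real.log d := by
    intro j hj
    refine (sum_negMulLog_le_blockCodeLength hd hq hc hs hr hsum j).trans ?_
    have := Real.log_natCast_nonneg d
    have := (Finset.mem_range.1 hj).le
    gcongr
  have haverage : ∀ x ∈ s,
      r x * ∑ j ∈ Finset.range q, blockCodeLength q c (window x j (n - j)) ≤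
        r x * birkhoffSum (shift d) (fun y => c (window y 0 q)) n x
          + r x * (q * (q * Real.log d)) := by
    intro x hx
    rw [← mul_add, hbirkhoff, Finset.range_eq_Ico (a := n)]
    refine mul_le_mul_of_nonneg_left ?_ (hr x hx)
    simpa only [zero_add] using sum_blockCodeLength_window_le hq hc x n.zero_le
  have hsumOffset := Finset.sum_le_sum hoffset
  have hsumAverage := Finset.sum_le_sum haverage
  simp only [Finset.sum_add_distrib, Finset.sum_const, Finset.card_range, nsmul_eq_mul]
    at hsumOffset
  rw [Finset.sum_comm] at hsumOffset
  simp only [Finset.sum_add_distrib, ← Finset.sum_mul, hsum, one_mul, Finset.mul_sum]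
    at hsumAverage
  rw [integral_orbitAverage hr (continuous_comp_window q c).stronglyMeasurable,
    mul_div_cancel₀ _ (by positivity)]
  linarith

/-- Misiurewicz's construction: the orbit average of a separated set with Gibbs weights. -/
lemma exists_almostInvariant_mul_pressure_le (hd : 0 < d) {X : Set (FullShift d)}
    (hX : X.Nonempty) (hinv : Set.MapsTo (shift d) X X) {ψ : FullShift d → ℝ} (hψ : Continuous ψ)
    (hn : 0 < n) :
    ∃ ν : ProbabilityMeasure (FullShift d), (ν : Measure (FullShift d)) X = 1 ∧
      (∀ g : BoundedContinuousFunction (FullShift d) ℝ,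
        |∫ x, g (shift d x) ∂(ν : Measure (FullShift d)) - ∫ x, g x ∂(ν : Measure (FullShift d))|
          ≤ 2 * ‖g‖ / n) ∧
      ∀ (q : ℕ) (c : List (Fin d) → ℝ), 0 < q → IsCodeLength q c →
        q * pressure X ψ ≤ ∫ x, c (window x 0 q) ∂(ν : Measure (FullShift d))
          + q * ∫ x, ψ x ∂(ν : Measure (FullShift d)) + (q + 2 * q * (q * Real.log d)) / n := by
  obtain ⟨K, hK⟩ := exists_abs_le_of_continuous hψ
  obtain ⟨s, hsne, hsX, hs, hZs⟩ := exists_separated_Zfun_le hX ψ n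
  set Z := ∑ x ∈ s, Real.exp (birkhoff ψ n x) with hZ
  have hZ0 : 0 < Z := Finset.sum_pos (fun _ _ => Real.exp_pos _) hsne
  set r : FullShift d → ℝ := fun x => Real.exp (birkhoff ψ n x) / Z
  have hr : ∀ x ∈ s, 0 ≤ r x := fun x _ => by positivity
  have hsum : ∑ x ∈ s, r x = 1 := by rw [← Finset.sum_div, ← hZ, div_self hZ0.ne']
  have hprob : IsProbabilityMeasure (orbitAverage (shift d) n s r) :=
    ⟨orbitAverage_apply_eq_one hn hr hsum (Set.mapsTo_univ _ _) (Set.subset_univ _)⟩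
  refine ⟨⟨orbitAverage (shift d) n s r, hprob⟩, orbitAverage_apply_eq_one hn hr hsum hinv hsX,
    fun g => abs_integral_comp_sub_integral_orbitAverage_le hr hsum continuous_shift.measurable
      g.continuous.stronglyMeasurable g.norm_coe_le_norm, fun q c hq hc => ?_⟩
  have hpressure : n * pressure X ψ ≤ 1 + Real.log Z := by
    have hlog := Real.log_le_log (Zfun_pos hX ψ n) hZs
    rw [Real.log_mul (Real.exp_pos 1).ne' hZ0.ne', Real.log_exp] at hlog
    exact (mul_pressure_le_log_Zfun hX hK hn).trans hlog
  have hGibbs := sum_negMulLog_gibbs_add hsne (birkhoff ψ n)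
  have hentropy := mul_sum_negMulLog_le_integral_orbitAverage hd hn hq hc hs hr hsum
  have hψint : ∑ x ∈ s, r x * birkhoff ψ n x = n * ∫ x, ψ x ∂orbitAverage (shift d) n s r := by
    rw [integral_orbitAverage hr hψ.stronglyMeasurable, mul_div_cancel₀ _ (by positivity)]
    rfl
  have hn' : (0 : ℝ) < n := by exact_mod_cast hn
  rw [← sub_le_iff_le_add', le_div_iff₀ hn']
  change (q * pressure X ψ - (∫ x, c (window x 0 q) ∂orbitAverage (shift d) n s r
    + q * ∫ x, ψ x ∂orbitAverage (shift d) n s r)) * n ≤ _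
  have hq' : (0 : ℝ) ≤ q := q.cast_nonneg
  change ∑ x ∈ s, Real.negMulLog (r x) + ∑ x ∈ s, r x * birkhoff ψ n x = Real.log Z at hGibbs
  rw [hψint] at hGibbs
  nlinarith [mul_le_mul_of_nonneg_left hpressure hq']

theorem exists_invProb_pressure_le {X : Set (FullShift d)} (hX : X.Nonempty)
    (hclosed : IsClosed X) (hinv : Set.MapsTo (shift d) X X) {ψ : FullShift d → ℝ}
    (hψ : Continuous ψ) :
    ∃ μ ∈ InvProb X, ∀ q : ℕ, 0 < q → pressure X ψ ≤ blockEnt μ q / q + ∫ x, ψ x ∂μ := by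
  have hd : 0 < d := Fin.pos (hX.some 0)
  choose ν hνX hνinv hνq using fun n : ℕ =>
    exists_almostInvariant_mul_pressure_le hd hX hinv hψ (n := n + 1) n.succ_pos
  set U : Ultrafilter ℕ := Ultrafilter.of atTop
  obtain ⟨μ, -, hμ⟩ := isCompact_univ.ultrafilter_le_nhds (U.map ν) (by simp)
  have hlim : Tendsto ν U (𝓝 μ) := hμ
  have hint : ∀ g : FullShift d → ℝ, Continuous g →
      Tendsto (fun n => ∫ x, g x ∂(ν n : Measure (FullShift d))) U
        (𝓝 (∫ x, g x ∂(μ : Measure (FullShift d)))) := fun g hg =>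
    ProbabilityMeasure.tendsto_iff_forall_integral_tendsto.1 hlim
      (BoundedContinuousFunction.mkOfCompact ⟨g, hg⟩)
  have hdiv : ∀ C : ℝ, Tendsto (fun n : ℕ => C / ((n + 1 : ℕ) : ℝ)) U (𝓝 0) := fun C =>
    ((tendsto_const_div_atTop_nhds_zero_nat C).comp (tendsto_add_atTop_nat 1)).mono_left
      (Ultrafilter.of_le atTop)
  have hpres := measurePreserving_of_tendsto continuous_shift hlim fun g =>
    squeeze_zero_norm (fun n => hνinv n g) (hdiv _)
  refine ⟨μ, ⟨inferInstance, hpres.map_eq, le_antisymm prob_le_one ?_⟩, fun q hq => ?_⟩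
  · simpa [hνX] using ProbabilityMeasure.limsup_measure_closed_le_of_tendsto hlim hclosed
  · rw [← sub_le_iff_le_add, le_div_iff₀' (Nat.cast_pos.2 hq), mul_sub]
    refine le_blockEnt_of_forall_isCodeLength fun c hc => sub_le_iff_le_add.2 ?_
    have h := ((hint _ (continuous_comp_window q c)).add ((hint ψ hψ).const_mul (q : ℝ))).add
      (hdiv (q + 2 * q * (q * Real.log d)))
    rw [add_zero] at h
    exact ge_of_tendsto' h fun n => hνq n q c hq hc

end VariationalPrinciple

/-! ### Concatenations with few patched letters -/

section Patched

open scoped Computability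

variable {α : Type*} {S : Language α} {u v w : List α}

/-- `Patched S b w`: the word `w` is a concatenation of words of `S` and of `b` single letters. -/
inductive Patched (S : Language α) : ℕ → List α → Prop
  | nil : Patched S 0 []
  | word {g w : List α} {b : ℕ} (hg : g ∈ S) (h : Patched S b w) : Patched S b (g ++ w)
  | letter (a : α) {w : List α} {b : ℕ} (h : Patched S b w) : Patched S (b + 1) (a :: w)

/-- The least number of single letters needed to write `w` as a concatenation of words of `S` and
of single letters. -/
def badCount (S : Language α) (w : List α) : ℕ := sInf {b | Patched S b w}

lemma append_mem_kstar (hu : u ∈ S∗) (hv : v ∈ S∗) : u ++ v ∈ S∗ := by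
  rw [← kstar_mul_kstar]
  exact Language.append_mem_mul hu hv

lemma Patched.append {b c : ℕ} (hu : Patched S b u) (hv : Patched S c v) :
    Patched S (b + c) (u ++ v) := by
  induction hu with
  | nil => simpa using hv
  | word hg _ ih => rw [List.append_assoc]; exact .word hg ih
  | letter a _ ih => rw [add_right_comm]; exact .letter a ih

lemma patched_length (S : Language α) (w : List α) : Patched S w.length w := by
  induction w with
  | nil => exact .nil
  | cons a w ih => exact .letter a ih

lemma Patched.mem_kstar_or {b : ℕ} (h : Patched S b w) :
    w ∈ S∗ ∨ ∃ u a v b', w = u ++ a :: v ∧ u ∈ S∗ ∧ Patched S b' v ∧ b = b' + 1 := by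
  induction h with
  | nil => exact .inl (Language.nil_mem_kstar S)
  | word hg h ih =>
    have hg' := (le_kstar : S ≤ S∗) hg
    rcases ih with ih | ⟨u, a, v, b', rfl, hu, hv, rfl⟩
    · exact .inl (append_mem_kstar hg' ih)
    · exact .inr ⟨_, a, v, b', (List.append_assoc ..).symm, append_mem_kstar hg' hu, hv, rfl⟩
  | letter a h _ => exact .inr ⟨[], a, _, _, rfl, Language.nil_mem_kstar S, h, rfl⟩

lemma patched_badCount (S : Language α) (w : List α) : Patched S (badCount S w) w :=
  Nat.sInf_mem (s := {b | Patched S b w}) ⟨_, patched_length S w⟩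

lemma badCount_le {b : ℕ} (h : Patched S b w) : badCount S w ≤ b := Nat.sInf_le h

lemma badCount_append_le (S : Language α) (u v : List α) :
    badCount S (u ++ v) ≤ badCount S u + badCount S v :=
  badCount_le ((patched_badCount S u).append (patched_badCount S v))

lemma badCount_le_length (S : Language α) (w : List α) : badCount S w ≤ w.length :=
  badCount_le (patched_length S w)

lemma badCount_eq_zero (hw : w ∈ S) : badCount S w = 0 :=
  Nat.le_zero.1 (badCount_le (by simpa using Patched.word hw .nil))

/-- `s` is additive under concatenation of words up to an error `D`. -/
def IsAlmostAdditive (s : List α → ℝ) (D : ℝ) : Prop := ∀ u v, |s (u ++ v) - s u - s v| ≤ D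

/-- The weight `exp (s w)` of a concatenation `w` of words of `S`; other words have weight `0`. -/
def concatWeight (S : Language α) (s : List α → ℝ) : List α → ℝ :=
  Set.indicator {w | w ∈ S∗} fun w => Real.exp (s w)

/-- The weight of an arbitrary word, with a penalty `C` for each letter that has to be patched to
write it as a concatenation of words of `S`. -/
def patchedWeight (S : Language α) (s : List α → ℝ) (C : ℝ) (w : List α) : ℝ :=
  Real.exp (s w - C * badCount S w)

variable {s : List α → ℝ} {C D K : ℝ}

lemma concatWeight_of_mem (hw : w ∈ S∗) : concatWeight S s w = Real.exp (s w) :=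
  Set.indicator_of_mem hw _

lemma concatWeight_of_notMem (hw : w ∉ S∗) : concatWeight S s w = 0 :=
  Set.indicator_of_notMem hw _

lemma concatWeight_nonneg (S : Language α) (s : List α → ℝ) (w : List α) :
    0 ≤ concatWeight S s w :=
  Set.indicator_nonneg (fun _ _ => (Real.exp_pos _).le) w

lemma concatWeight_mul_le (hs : IsAlmostAdditive s D) (u v : List α) :
    concatWeight S s u * concatWeight S s v ≤ Real.exp D * concatWeight S s (u ++ v) := by
  have hnonneg := mul_nonneg (Real.exp_pos D).le (concatWeight_nonneg S s (u ++ v))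
  by_cases hu : (u ∈ S∗)
  · by_cases hv : (v ∈ S∗)
    · rw [concatWeight_of_mem hu, concatWeight_of_mem hv,
        concatWeight_of_mem (append_mem_kstar hu hv), ← Real.exp_add, ← Real.exp_add]
      have := (abs_le.1 (hs u v)).1
      exact Real.exp_le_exp.2 (by linarith)
    · rwa [concatWeight_of_notMem hv, mul_zero]
  · rwa [concatWeight_of_notMem hu, zero_mul]

lemma patchedWeight_append_cons_le (hs : IsAlmostAdditive s D) (hK : ∀ a, s [a] ≤ K) (hC : 0 ≤ C)
    {b : ℕ} (hv : Patched S b v) (hu : u ∈ S∗) (a : α) :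
    Real.exp (s (u ++ a :: v) - C * (b + 1)) ≤
      concatWeight S s u * (Real.exp (K + 2 * D - C) * patchedWeight S s C v) := by
  rw [concatWeight_of_mem hu, patchedWeight, ← Real.exp_add, ← Real.exp_add]
  refine Real.exp_le_exp.2 ?_
  have hbad : C * badCount S v ≤ C * b := by
    have : (badCount S v : ℝ) ≤ b := by exact_mod_cast badCount_le hv
    gcongr
  have huav := (abs_le.1 (hs u (a :: v))).2
  have hav : s (a :: v) - s [a] - s v ≤ D := (abs_le.1 (hs [a] v)).2
  linarith [hK a]

/-- Either no letter of `w` is patched, or one splits `w` at the first patched letter. -/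
lemma patchedWeight_le (hs : IsAlmostAdditive s D) (hK : ∀ a, s [a] ≤ K) (hC : 0 ≤ C)
    (w : List α) :
    patchedWeight S s C w ≤ concatWeight S s w + ∑ i ∈ Finset.range w.length,
      concatWeight S s (w.take i) *
        (Real.exp (K + 2 * D - C) * patchedWeight S s C (w.drop (i + 1))) := by
  have hterm : ∀ i ∈ Finset.range w.length, 0 ≤ concatWeight S s (w.take i) *
      (Real.exp (K + 2 * D - C) * patchedWeight S s C (w.drop (i + 1))) := fun i _ =>
    mul_nonneg (concatWeight_nonneg S s _) (mul_pos (Real.exp_pos _) (Real.exp_pos _)).le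
  rcases (patched_badCount S w).mem_kstar_or with hw | ⟨u, a, v, b, hw, hu, hv, hb⟩
  · refine le_add_of_le_of_nonneg ?_ (Finset.sum_nonneg hterm)
    rw [concatWeight_of_mem hw]
    exact Real.exp_le_exp.2 (sub_le_self _ (by positivity))
  · refine le_add_of_nonneg_of_le (concatWeight_nonneg S s w) (le_trans ?_
      (Finset.single_le_sum hterm (Finset.mem_range.2 (by simp [hw] : u.length < w.length))))
    rw [patchedWeight, hb, hw, Nat.cast_succ]
    rw [List.take_left, List.append_cons, List.drop_left' (by simp), List.append_assoc]
    exact patchedWeight_append_cons_le hs hK hC hv hu a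

end Patched

section PatchedSums

variable {d : ℕ} {S : Language (Fin d)} {s : List (Fin d) → ℝ} {A C D K Q : ℝ}

/-- The total weight of the words of length `n` that are concatenations of words of `S`. -/
def concatSum (S : Language (Fin d)) (s : List (Fin d) → ℝ) (n : ℕ) : ℝ :=
  ∑ w ∈ words d n, concatWeight S s w

/-- The total patched weight of the words of length `n`. -/
def patchedSum (S : Language (Fin d)) (s : List (Fin d) → ℝ) (C : ℝ) (n : ℕ) : ℝ :=
  ∑ w ∈ words d n, patchedWeight S s C w

lemma concatSum_nonneg (S : Language (Fin d)) (s : List (Fin d) → ℝ) (n : ℕ) :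
    0 ≤ concatSum S s n :=
  Finset.sum_nonneg fun w _ => concatWeight_nonneg S s w

lemma concatSum_mul_le (hs : IsAlmostAdditive s D) (k l : ℕ) :
    concatSum S s k * concatSum S s l ≤ Real.exp D * concatSum S s (k + l) := by
  simp_rw [concatSum, sum_words_add, Finset.sum_mul_sum, Finset.mul_sum]
  exact Finset.sum_le_sum fun u _ => Finset.sum_le_sum fun v _ => concatWeight_mul_le hs u v

lemma concatSum_pow_le (hs : IsAlmostAdditive s D) (k r : ℕ) :
    concatSum S s k ^ (r + 1) ≤ Real.exp (D * r) * concatSum S s (k * (r + 1)) := by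
  induction r with
  | zero => simp
  | succ r ih =>
    calc concatSum S s k ^ (r + 1 + 1)
        ≤ Real.exp (D * r) * concatSum S s (k * (r + 1)) * concatSum S s k := by
          rw [pow_succ]
          exact mul_le_mul_of_nonneg_right ih (concatSum_nonneg _ _ _)
      _ ≤ Real.exp (D * r) * (Real.exp D * concatSum S s (k * (r + 1) + k)) := by
          rw [mul_assoc]
          exact mul_le_mul_of_nonneg_left (concatSum_mul_le hs _ _) (Real.exp_pos _).le
      _ = Real.exp (D * (r + 1 : ℕ)) * concatSum S s (k * (r + 1 + 1)) := by
          rw [← mul_assoc, ← Real.exp_add, Nat.cast_succ, mul_add_one D, ← mul_add_one k]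

lemma sum_words_take_mul_drop (f g : List (Fin d) → ℝ) {i n : ℕ} (hi : i < n) :
    ∑ w ∈ words d n, f (w.take i) * g (w.drop (i + 1)) =
      (∑ u ∈ words d i, f u) * (d * ∑ v ∈ words d (n - 1 - i), g v) := by
  obtain ⟨j, rfl⟩ := Nat.exists_eq_add_of_lt hi
  rw [show i + j + 1 = i + (1 + j) by ring, show i + (1 + j) - 1 - i = j by omega, sum_words_add,
    Finset.sum_mul]
  refine Finset.sum_congr rfl fun u hu => ?_
  rw [sum_words_add, ← mem_words.1 hu]
  have hletter : ∀ a ∈ words d 1, ∑ v ∈ words d j,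
      f ((u ++ (a ++ v)).take u.length) * g ((u ++ (a ++ v)).drop (u.length + 1)) =
        f u * ∑ v ∈ words d j, g v := by
    intro a ha
    rw [Finset.mul_sum]
    refine Finset.sum_congr rfl fun v _ => ?_
    rw [List.take_left, ← List.append_assoc, List.drop_left']
    simp [mem_words.1 ha]
  rw [Finset.sum_congr rfl hletter, sum_words, Finset.sum_const]
  simp only [Finset.card_univ, Fintype.card_pi, Fintype.card_fin, Finset.prod_const, pow_one,
    nsmul_eq_mul]
  ring

lemma patchedSum_le_sum (hs : IsAlmostAdditive s D) (hK : ∀ a, s [a] ≤ K) (hC : 0 ≤ C) (n : ℕ) :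
    patchedSum S s C n ≤ concatSum S s n + ∑ i ∈ Finset.range n,
      concatSum S s i * (d * Real.exp (K + 2 * D - C) * patchedSum S s C (n - 1 - i)) := by
  calc patchedSum S s C n
      ≤ ∑ w ∈ words d n, (concatWeight S s w + ∑ i ∈ Finset.range n, concatWeight S s (w.take i) *
          (Real.exp (K + 2 * D - C) * patchedWeight S s C (w.drop (i + 1)))) :=
        Finset.sum_le_sum fun w hw => mem_words.1 hw ▸ patchedWeight_le hs hK hC w
    _ = _ := by
        rw [Finset.sum_add_distrib, Finset.sum_comm (s := words d n)]
        refine congrArg₂ _ rfl (Finset.sum_congr rfl fun i hi => ?_)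
        rw [sum_words_take_mul_drop (concatWeight S s)
          (fun v => Real.exp (K + 2 * D - C) * patchedWeight S s C v) (Finset.mem_range.1 hi),
          ← Finset.mul_sum, mul_assoc (d : ℝ)]
        rfl

/-- For `C` large the patched words grow hardly faster than the concatenations. -/
lemma patchedSum_le (hs : IsAlmostAdditive s D) (hK : ∀ a, s [a] ≤ K) (hC : 0 ≤ C)
    (hconcat : ∀ k : ℕ, concatSum S s k ≤ A * Real.exp (k * Q)) (n : ℕ) :
    patchedSum S s C n ≤ A * Real.exp (n * Q) *
      (1 + A * (d * Real.exp (K + 2 * D - C)) * Real.exp (-Q)) ^ n := by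
  have hA : 0 ≤ A := (concatSum_nonneg S s 0).trans (by simpa using hconcat 0)
  set κ := (d : ℝ) * Real.exp (K + 2 * D - C)
  have hκ : 0 ≤ κ := by positivity
  set θ := A * κ * Real.exp (-Q) with hθ
  induction n using Nat.strong_induction_on with
  | _ n ih =>
    have hterm : ∀ i ∈ Finset.range n, concatSum S s i * (κ * patchedSum S s C (n - 1 - i)) ≤
        A * Real.exp (n * Q) * (θ * (1 + θ) ^ (n - 1 - i)) := by
      intro i hi
      obtain ⟨j, rfl⟩ := Nat.exists_eq_add_of_lt (Finset.mem_range.1 hi)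
      have hj : i + j + 1 - 1 - i = j := by omega
      rw [hj]
      calc concatSum S s i * (κ * patchedSum S s C j)
          ≤ A * Real.exp (i * Q) * (κ * (A * Real.exp (j * Q) * (1 + θ) ^ j)) :=
            mul_le_mul (hconcat i) (mul_le_mul_of_nonneg_left (ih j (by omega)) hκ)
              (mul_nonneg hκ (Finset.sum_nonneg fun _ _ => (Real.exp_pos _).le)) (by positivity)
        _ = A * (Real.exp (i * Q) * Real.exp (j * Q)) * ((A * κ) * (1 + θ) ^ j) := by ring
        _ = A * (Real.exp ((i + j + 1 : ℕ) * Q) * Real.exp (-Q)) * ((A * κ) * (1 + θ) ^ j) := by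
            rw [← Real.exp_add, ← Real.exp_add]
            push_cast
            ring_nf
        _ = A * Real.exp ((i + j + 1 : ℕ) * Q) * (θ * (1 + θ) ^ j) := by rw [hθ]; ring
    have hgeom : ∑ i ∈ Finset.range n, θ * (1 + θ) ^ (n - 1 - i) = (1 + θ) ^ n - 1 := by
      rw [Finset.sum_range_reflect (fun i => θ * (1 + θ) ^ i), ← Finset.mul_sum]
      simpa using mul_geom_sum (1 + θ) n
    calc patchedSum S s C n
        ≤ A * Real.exp (n * Q) + ∑ i ∈ Finset.range n,
            A * Real.exp (n * Q) * (θ * (1 + θ) ^ (n - 1 - i)) :=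
          (patchedSum_le_sum hs hK hC n).trans (add_le_add (hconcat n) (Finset.sum_le_sum hterm))
      _ = A * Real.exp (n * Q) * (1 + θ) ^ n := by rw [← Finset.mul_sum, hgeom]; ring

end PatchedSums

/-! ### Coded shifts -/

section CodedShift

variable {d : ℕ} {𝒢 S T : Set (List (Fin d))} {x : FullShift d} {p : ℤ → ℤ} {i j : ℤ}

/-- The word read off `x` on the positions from `i` to `j - 1` belongs to `𝒢`. -/
def IsBlock (𝒢 : Set (List (Fin d))) (x : FullShift d) (i j : ℤ) : Prop :=
  ∃ g ∈ 𝒢, j = i + g.length ∧ window x i g.length = g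

lemma IsBlock.mono (h : S ⊆ T) (hx : IsBlock S x i j) : IsBlock T x i j :=
  hx.imp fun _ hg => hg.imp_left fun hgS => h hgS

lemma IsBlock.lt (hne : ∀ g ∈ 𝒢, g ≠ []) (h : IsBlock 𝒢 x i j) : i < j := by
  obtain ⟨g, hg, rfl, -⟩ := h
  have := List.length_pos_iff.2 (hne g hg)
  omega

lemma isBlock_shift_iterate (k : ℕ) :
    IsBlock 𝒢 ((shift d)^[k] x) i j ↔ IsBlock 𝒢 x (i + k) (j + k) := by
  simp only [IsBlock, window_shift_iterate]
  exact exists_congr fun g => and_congr_right fun _ => and_congr_left fun _ => by omega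

lemma isParsing_iff : IsParsing 𝒢 x p ↔ StrictMono p ∧ ∀ j, IsBlock 𝒢 x (p j) (p (j + 1)) := by
  simp only [IsParsing, IsBlock, window_eq_list_iff]

lemma isParsing_shift_iterate (k : ℕ) :
    IsParsing 𝒢 ((shift d)^[k] x) (fun j => p j - k) ↔ IsParsing 𝒢 x p := by
  simp only [isParsing_iff, isBlock_shift_iterate, sub_add_cancel, StrictMono, sub_lt_sub_iff_right]

lemma IsParsing.comp_add_right (hp : IsParsing 𝒢 x p) (j : ℤ) :
    IsParsing 𝒢 x fun i => p (i + j) := by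
  rw [isParsing_iff] at hp ⊢
  exact ⟨fun a b hab => hp.1 (by simpa using hab), fun i => add_right_comm i 1 j ▸ hp.2 (i + j)⟩

lemma Xseq_mono (h : S ⊆ T) : Xseq S ⊆ Xseq T := by
  rintro x ⟨p, hp⟩
  rw [isParsing_iff] at hp
  exact ⟨p, isParsing_iff.2 ⟨hp.1, fun j => (hp.2 j).mono h⟩⟩

lemma codedShift_mono (h : S ⊆ T) : codedShift S ⊆ codedShift T :=
  closure_mono (Xseq_mono h)

lemma shift_iterate_mem_Xseq (k : ℕ) : (shift d)^[k] x ∈ Xseq 𝒢 ↔ x ∈ Xseq 𝒢 := by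
  constructor
  · rintro ⟨p, hp⟩
    exact ⟨fun j => p j + k, (isParsing_shift_iterate k).1 (by simpa using hp)⟩
  · rintro ⟨p, hp⟩
    exact ⟨_, (isParsing_shift_iterate k).2 hp⟩

lemma preimage_shift_Xseq : shift d ⁻¹' Xseq 𝒢 = Xseq 𝒢 :=
  Set.ext fun _ => shift_iterate_mem_Xseq 1

lemma mapsTo_shift_codedShift : Set.MapsTo (shift d) (codedShift 𝒢) (codedShift 𝒢) :=
  Set.MapsTo.closure (fun _ => (shift_iterate_mem_Xseq 1).2) continuous_shift

/-- The point obtained by repeating the word `w`; the letter `z` is irrelevant unless `w = []`. -/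
def periodicPoint (z : Fin d) (w : List (Fin d)) : FullShift d :=
  fun i => w.getD (i % w.length).toNat z

lemma window_periodicPoint (z : Fin d) (w : List (Fin d)) (q : ℤ) :
    window (periodicPoint z w) (w.length * q) w.length = w := by
  rw [window_eq_list_iff]
  intro l hl
  rw [periodicPoint, Int.mul_add_emod_self_left, Int.emod_eq_of_lt (by omega) (by omega)]
  simp [hl]

lemma isPeriodicPt_periodicPoint (z : Fin d) (w : List (Fin d)) :
    Function.IsPeriodicPt (shift d) w.length (periodicPoint z w) :=
  funext fun i => by simp [shift_iterate, periodicPoint]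

lemma isBlock_periodicPoint (z : Fin d) {g : List (Fin d)} (hg : g ∈ 𝒢)
    {L L₁ L₂ : List (List (Fin d))} (hL : L = L₁ ++ g :: L₂) (q : ℤ) :
    IsBlock 𝒢 (periodicPoint z L.flatten) (L.flatten.length * q + L₁.flatten.length)
      (L.flatten.length * q + (L₁ ++ [g]).flatten.length) := by
  refine ⟨g, hg, by simp [add_assoc], ?_⟩
  have hw : L.flatten = L₁.flatten ++ (g ++ L₂.flatten) := by simp [hL]
  have hlen : L.flatten.length = L₁.flatten.length + (g.length + L₂.flatten.length) := by
    simp only [hw, List.length_append]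
  have hwindow : window (periodicPoint z L.flatten) (L.flatten.length * q)
      (L₁.flatten.length + (g.length + L₂.flatten.length)) =
        L₁.flatten ++ (g ++ L₂.flatten) := by
    rw [← hlen, window_periodicPoint, hw]
  rw [window_add, window_add] at hwindow
  exact (List.append_inj (List.append_inj hwindow (by simp)).2 (by simp)).1

/-- The cut points of the periodic repetition of `L.flatten` into the words of `L`. -/
def periodicCut (L : List (List (Fin d))) (j : ℤ) : ℤ :=
  L.flatten.length * (j / L.length) + (L.take (j % L.length).toNat).flatten.length

lemma periodicCut_mul_add {L : List (List (Fin d))} (hL : L ≠ []) (q : ℤ) {t : ℕ}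
    (ht : t ≤ L.length) : periodicCut L (L.length * q + t) =
      L.flatten.length * q + (L.take t).flatten.length := by
  have hpos := List.length_pos_iff.2 hL
  rcases ht.lt_or_eq with ht | rfl
  · rw [periodicCut, Int.mul_add_ediv_left _ _ (by omega), Int.mul_add_emod_self_left,
      Int.ediv_eq_zero_of_lt (by omega) (by omega), Int.emod_eq_of_lt (by omega) (by omega)]
    simp
  · rw [← mul_add_one, periodicCut, Int.mul_ediv_cancel_left _ (by omega), Int.mul_emod_right]
    simp [mul_add]

lemma periodicPoint_mem_Xseq (hne : ∀ g ∈ 𝒢, g ≠ []) (z : Fin d) {L : List (List (Fin d))}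
    (hL : L ≠ []) (hL𝒢 : ∀ g ∈ L, g ∈ 𝒢) : periodicPoint z L.flatten ∈ Xseq 𝒢 := by
  have hblock : ∀ j, IsBlock 𝒢 (periodicPoint z L.flatten) (periodicCut L j)
      (periodicCut L (j + 1)) := by
    intro j
    have hpos : (0 : ℤ) < L.length := by exact_mod_cast List.length_pos_iff.2 hL
    obtain ⟨t, ht⟩ := Int.eq_ofNat_of_zero_le (Int.emod_nonneg j hpos.ne')
    have htL : t < L.length := by
      have := Int.emod_lt_of_pos j hpos
      omega
    obtain ⟨q, rfl⟩ : ∃ q, j = L.length * q + t := ⟨_, ht ▸ (Int.mul_ediv_add_emod j _).symm⟩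
    rw [add_assoc, ← Nat.cast_succ, periodicCut_mul_add hL q htL.le, periodicCut_mul_add hL q htL,
      List.take_succ_eq_append_getElem htL]
    exact isBlock_periodicPoint z (hL𝒢 _ (List.getElem_mem htL))
      (L₂ := L.drop (t + 1)) (by simp) q
  exact ⟨_, isParsing_iff.2 ⟨strictMono_int_of_lt_succ fun j => (hblock j).lt hne, hblock⟩⟩

lemma exists_isPeriodicPt_mem_Xseq (hne : ∀ g ∈ 𝒢, g ≠ []) (h : 𝒢.Nonempty) :
    ∃ x ∈ Xseq 𝒢, ∃ ℓ, 0 < ℓ ∧ Function.IsPeriodicPt (shift d) ℓ x := by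
  obtain ⟨g, hg⟩ := h
  obtain ⟨z, -⟩ := List.exists_mem_of_ne_nil g (hne g hg)
  refine ⟨periodicPoint z [g].flatten, periodicPoint_mem_Xseq hne z (List.cons_ne_nil _ _)
    (by simpa using hg), _, ?_, isPeriodicPt_periodicPoint z _⟩
  simpa using List.length_pos_iff.2 (hne g hg)

lemma codedShift_nonempty (hne : ∀ g ∈ 𝒢, g ≠ []) (h : 𝒢.Nonempty) : (codedShift 𝒢).Nonempty :=
  let ⟨x, hx, _⟩ := exists_isPeriodicPt_mem_Xseq hne h
  ⟨x, subset_closure hx⟩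

end CodedShift

section ConcatSumPressure

variable {d : ℕ} {S : Language (Fin d)} {ψ : FullShift d → ℝ} {s : List (Fin d) → ℝ}
  {K D D₀ : ℝ}

lemma concatSum_le_Zfun (hne : ∀ g ∈ S, g ≠ []) (hK : ∀ x, |ψ x| ≤ K)
    (hs : ∀ w x, window x 0 w.length = w → s w ≤ birkhoff ψ w.length x + D₀) {n : ℕ}
    (hn : 0 < n) : concatSum S s n ≤ Real.exp D₀ * Zfun (codedShift S) ψ n := by
  rw [concatSum, Zfun_eq_sum_wordWeight, Finset.mul_sum]
  refine Finset.sum_le_sum fun w hw => ?_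
  by_cases hwS : w ∈ KStar.kstar S
  · rw [concatWeight_of_mem hwS]
    obtain ⟨L, rfl, hL⟩ := Language.mem_kstar.1 hwS
    have hw0 : L.flatten ≠ [] := List.length_pos_iff.1 (mem_words.1 hw ▸ hn)
    obtain ⟨z, -⟩ := List.exists_mem_of_ne_nil _ hw0
    have hwindow := mul_zero (L.flatten.length : ℤ) ▸ window_periodicPoint z L.flatten 0
    have hmem : periodicPoint z L.flatten ∈ codedShift S :=
      subset_closure (periodicPoint_mem_Xseq hne z (by rintro rfl; exact hw0 rfl) hL)
    calc Real.exp (s L.flatten)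
        ≤ Real.exp D₀ * Real.exp (birkhoff ψ L.flatten.length (periodicPoint z L.flatten)) := by
          rw [← Real.exp_add, add_comm D₀]
          exact Real.exp_le_exp.2 (hs _ _ hwindow)
      _ ≤ Real.exp D₀ * wordWeight (codedShift S) ψ L.flatten :=
          mul_le_mul_of_nonneg_left (exp_birkhoff_le_wordWeight hK hmem hwindow)
            (Real.exp_pos _).le
  · rw [concatWeight_of_notMem hwS]
    exact mul_nonneg (Real.exp_pos _).le (wordWeight_nonneg _ _ _)

lemma concatSum_zero_le (hs0 : s [] = 0) : concatSum S s 0 ≤ 1 := by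
  have hnil : concatWeight S s [] = 1 := by
    rw [concatWeight_of_mem (Language.nil_mem_kstar S), hs0, Real.exp_zero]
  simp [concatSum, sum_words, hnil]

/-- Supermultiplicativity of `concatSum` and submultiplicativity of `Zfun`, both up to constants,
turn the comparison of growth rates into a bound at every length. -/
lemma concatSum_le (hS : S.Nonempty) (hne : ∀ g ∈ S, g ≠ []) (hK : ∀ x, |ψ x| ≤ K)
    (hD₀ : 0 ≤ D₀) (hD : 0 ≤ D) (hs0 : s [] = 0)
    (hsψ : ∀ w x, window x 0 w.length = w → s w ≤ birkhoff ψ w.length x + D₀)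
    (hs : IsAlmostAdditive s D) (k : ℕ) :
    concatSum S s k ≤ Real.exp (D₀ + D) * Real.exp (k * pressure (codedShift S) ψ) := by
  rcases Nat.eq_zero_or_pos k with rfl | hk
  · refine (concatSum_zero_le hs0).trans ?_
    rw [Nat.cast_zero, zero_mul, Real.exp_zero, mul_one]
    exact Real.one_le_exp (add_nonneg hD₀ hD)
  rcases (concatSum_nonneg S s k).eq_or_lt with h0 | hpos
  · rw [← h0]
    positivity
  have hX := codedShift_nonempty hne hS
  have hk' : (0 : ℝ) < k := by exact_mod_cast hk
  rw [← Real.exp_add, ← Real.log_le_iff_le_exp hpos, ← sub_le_iff_le_add', ← div_le_iff₀' hk']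
  refine le_pressure fun n hn => ?_
  obtain ⟨r, rfl⟩ := Nat.exists_eq_succ_of_ne_zero hn.ne'
  have hZ := Zfun_pos hX ψ (r + 1)
  have hpow : concatSum S s k ^ (r + 1) ≤
      Real.exp (D * r + D₀) * Zfun (codedShift S) ψ (r + 1) ^ k := calc
    concatSum S s k ^ (r + 1) ≤ Real.exp (D * r) * concatSum S s (k * (r + 1)) :=
        concatSum_pow_le hs k r
    _ ≤ Real.exp (D * r) * (Real.exp D₀ * Zfun (codedShift S) ψ ((r + 1) * k)) := by
        rw [mul_comm k]
        gcongr
        exact concatSum_le_Zfun hne hK hsψ (by positivity)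
    _ ≤ Real.exp (D * r + D₀) * Zfun (codedShift S) ψ (r + 1) ^ k := by
        rw [← mul_assoc, ← Real.exp_add]
        gcongr
        exact Zfun_mul_le hX mapsTo_shift_codedShift hK (r + 1) hk
  have hlog := Real.log_le_log (pow_pos hpos _) hpow
  rw [Real.log_pow, Real.log_mul (Real.exp_pos _).ne' (pow_pos hZ _).ne', Real.log_exp,
    Real.log_pow] at hlog
  rw [mul_div_assoc', div_le_iff₀ hk', Nat.succ_eq_add_one]
  push_cast at hlog ⊢
  nlinarith [mul_nonneg hD₀ (Nat.cast_nonneg (α := ℝ) r)]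

end ConcatSumPressure

/-! ### Parsings -/

section Parsings

lemma sub_le_sub_of_strictMono {p : ℤ → ℤ} (hp : StrictMono p) {j k : ℤ} (h : j ≤ k) :
    k - j ≤ p k - p j := by
  have hmono : Monotone fun i => p i - i := monotone_int_of_le_succ fun i => by
    have := hp (lt_add_one i)
    omega
  have := hmono h
  dsimp only at this
  omega

lemma exists_le_lt_of_strictMono {p : ℤ → ℤ} (hp : StrictMono p) (i : ℤ) :
    ∃ j, p j ≤ i ∧ i < p (j + 1) := by
  obtain ⟨j, hj, hmax⟩ := Int.exists_greatest_of_bdd (P := fun j => p j ≤ i)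
    ⟨max 0 (i - p 0), fun k hk => by
      by_contra! hlt
      have := sub_le_sub_of_strictMono hp (j := 0) (k := k) (by omega)
      omega⟩
    ⟨min 0 (i - p 0), by
      have := sub_le_sub_of_strictMono hp (min_le_left 0 (i - p 0))
      omega⟩
  exact ⟨j, hj, not_le.1 fun hlt => (lt_add_one j).not_ge (hmax _ hlt)⟩

lemma orderIso_int_apply (e : ℤ ≃o ℤ) (j : ℤ) : e j = e 0 + j := by
  induction j using Int.induction_on with
  | zero => simp
  | succ j ih => rw [← Order.succ_eq_add_one, e.map_succ, ih, Order.succ_eq_add_one, add_assoc]; rfl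
  | pred j ih => rw [← Order.pred_eq_sub_one, e.map_pred, ih, Order.pred_eq_sub_one,
      Order.pred_eq_sub_one, add_sub_assoc]

lemma eq_of_range_eq_of_strictMono {p q : ℤ → ℤ} (hp : StrictMono p) (hq : StrictMono q)
    (h : Set.range p = Set.range q) {i : ℤ} (hp0 : p 0 ≤ i) (hp1 : i < p 1) (hq0 : q 0 ≤ i)
    (hq1 : i < q 1) : p = q := by
  let e : ℤ ≃o ℤ := (hp.orderIso p).trans ((OrderIso.setCongr _ _ h).trans (hq.orderIso q).symm)
  have hqp : ∀ j, q (e 0 + j) = p j := fun j => by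
    rw [← orderIso_int_apply]
    exact congrArg Subtype.val ((hq.orderIso q).apply_symm_apply ⟨p j, h ▸ Set.mem_range_self j⟩)
  have hq0' : q (e 0) = p 0 := by simpa using hqp 0
  have hlt : e 0 < 1 := hq.lt_iff_lt.1 ((hq0'.trans_le hp0).trans_lt hq1)
  have hgt : 0 < e 0 + 1 := hq.lt_iff_lt.1 (hq0.trans_lt (hqp 1 ▸ hp1))
  have h0 : e 0 = 0 := by omega
  exact funext fun j => by rw [← hqp, h0, zero_add]

variable {d : ℕ} {𝒢 S T : Set (List (Fin d))} {x : FullShift d} {p q : ℤ → ℤ}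

/-- A parsing indexed so that its zeroth block covers the position `0`. -/
def IsCenteredParsing (𝒢 : Set (List (Fin d))) (x : FullShift d) (p : ℤ → ℤ) : Prop :=
  IsParsing 𝒢 x p ∧ p 0 ≤ 0 ∧ 0 < p 1

lemma exists_isCenteredParsing (hx : x ∈ Xseq 𝒢) : ∃ p, IsCenteredParsing 𝒢 x p := by
  obtain ⟨p, hp⟩ := hx
  obtain ⟨j, h0, h1⟩ := exists_le_lt_of_strictMono hp.1 0
  exact ⟨_, hp.comp_add_right j, by simpa using h0, by rwa [add_comm 1 j]⟩

lemma IsCenteredParsing.isBlock (hp : IsCenteredParsing 𝒢 x p) : IsBlock 𝒢 x (p 0) (p 1) :=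
  (isParsing_iff.1 hp.1).2 0

lemma IsCenteredParsing.eq (hU : UniqueRep 𝒢) (hp : IsCenteredParsing 𝒢 x p)
    (hq : IsCenteredParsing 𝒢 x q) : p = q :=
  eq_of_range_eq_of_strictMono hp.1.1 hq.1.1 (hU x p q hp.1 hq.1) hp.2.1 hp.2.2 hq.2.1 hq.2.2

lemma IsCenteredParsing.shift_iterate (hp : IsCenteredParsing 𝒢 x p) {k : ℕ} (hk : k < p 1) :
    IsCenteredParsing 𝒢 ((shift d)^[k] x) fun j => p j - k :=
  ⟨(isParsing_shift_iterate k).2 hp.1, (by have := hp.2.1; omega : p 0 - k ≤ 0),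
    (by omega : 0 < p 1 - k)⟩

lemma IsCenteredParsing.next (hp : IsCenteredParsing 𝒢 x p) {r : ℕ} (hr : p 1 = r) :
    IsCenteredParsing 𝒢 ((shift d)^[r] x) fun j => p (j + 1) - r :=
  ⟨(isParsing_shift_iterate _).2 (hp.1.comp_add_right 1), by simp [hr],
    sub_pos.2 (hr ▸ hp.1.1 (by norm_num))⟩

/-- The points of `Xseq 𝒢` whose position `0` is covered by a block from `S`. -/
def goodSet (𝒢 S : Set (List (Fin d))) : Set (FullShift d) :=
  {x | ∃ p, IsCenteredParsing 𝒢 x p ∧ IsBlock S x (p 0) (p 1)}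

lemma IsCenteredParsing.mem_goodSet_iff (hU : UniqueRep 𝒢) (hp : IsCenteredParsing 𝒢 x p) :
    x ∈ goodSet 𝒢 S ↔ IsBlock S x (p 0) (p 1) :=
  ⟨fun ⟨_, hq, hS⟩ => hp.eq hU hq ▸ hS, fun hS => ⟨p, hp, hS⟩⟩

lemma goodSet_self : goodSet 𝒢 𝒢 = Xseq 𝒢 := by
  refine Set.Subset.antisymm (fun x ⟨p, hp, _⟩ => ⟨p, hp.1⟩) fun x hx => ?_
  obtain ⟨p, hp⟩ := exists_isCenteredParsing hx
  exact ⟨p, hp, hp.isBlock⟩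

lemma goodSet_mono (h : S ⊆ T) : goodSet 𝒢 S ⊆ goodSet 𝒢 T :=
  fun _ ⟨p, hp, hS⟩ => ⟨p, hp, hS.mono h⟩

lemma iUnion_goodSet {ι : Type*} (S : ι → Set (List (Fin d))) :
    ⋃ i, goodSet 𝒢 (S i) = goodSet 𝒢 (⋃ i, S i) := by
  refine Set.Subset.antisymm
    (Set.iUnion_subset fun i => goodSet_mono (Set.subset_iUnion S i)) fun x ⟨p, hp, g, hg, h⟩ => ?_
  obtain ⟨i, hi⟩ := Set.mem_iUnion.1 hg
  exact Set.mem_iUnion.2 ⟨i, p, hp, g, hi, h⟩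

lemma measurableSet_isBlock (S : Set (List (Fin d))) (i j : ℤ) :
    MeasurableSet {x | IsBlock S x i j} := by
  have hword : ∀ g : List (Fin d), MeasurableSet {x : FullShift d | window x i g.length = g} :=
    fun g => by
    simp only [window_eq_list_iff, Set.ofPred_forall]
    exact MeasurableSet.iInter fun l => MeasurableSet.iInter fun _ =>
      measurable_pi_apply (i + l) (measurableSet_singleton _)
  exact measurableSet_setOfPred.2 (Measurable.exists fun g =>
    measurable_const.and (measurable_const.and (measurableSet_setOfPred.1 (hword g))))

lemma measurableSet_isBlock_prod (S : Set (List (Fin d))) (j k : ℤ) :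
    MeasurableSet {y : FullShift d × (ℤ → ℤ) | IsBlock S y.1 (y.2 j) (y.2 k)} := by
  have hblock : MeasurableSet {t : FullShift d × ℤ × ℤ | IsBlock S t.1 t.2.1 t.2.2} :=
    measurableSet_setOfPred.2 (measurable_from_prod_countable_left fun t =>
      measurableSet_setOfPred.1 (measurableSet_isBlock S t.1 t.2))
  exact hblock.preimage (f := fun y : FullShift d × (ℤ → ℤ) => (y.1, y.2 j, y.2 k)) (by fun_prop)

lemma measurableSet_isCenteredParsing (𝒢 : Set (List (Fin d))) :
    MeasurableSet {y : FullShift d × (ℤ → ℤ) | IsCenteredParsing 𝒢 y.1 y.2} := by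
  have happly : ∀ j, Measurable fun y : FullShift d × (ℤ → ℤ) => y.2 j := fun j => by fun_prop
  have hiff : ∀ y : FullShift d × (ℤ → ℤ), IsCenteredParsing 𝒢 y.1 y.2 ↔
      ((∀ j, y.2 j < y.2 (j + 1)) ∧ ∀ j, IsBlock 𝒢 y.1 (y.2 j) (y.2 (j + 1))) ∧
        y.2 0 ≤ 0 ∧ 0 < y.2 1 := fun y => by
    rw [IsCenteredParsing, isParsing_iff]
    exact and_congr_left fun _ => and_congr_left fun _ =>
      ⟨fun h j => h (lt_add_one j), strictMono_int_of_lt_succ⟩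
  simp only [hiff, measurableSet_setOfPred]
  refine .and (.and (.forall fun j => ?_) (.forall fun j => ?_)) (.and ?_ ?_)
  · exact measurableSet_setOfPred.1 (measurableSet_lt (happly j) (happly (j + 1)))
  · exact measurableSet_setOfPred.1 (measurableSet_isBlock_prod 𝒢 j (j + 1))
  · exact measurableSet_setOfPred.1 (measurableSet_le (happly 0) measurable_const)
  · exact measurableSet_setOfPred.1 (measurableSet_lt measurable_const (happly 1))

-- By uniqueness `goodSet 𝒢 S` is an injective projection of a Borel set, hence Borel.
lemma measurableSet_goodSet (hU : UniqueRep 𝒢) (S : Set (List (Fin d))) :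
    MeasurableSet (goodSet 𝒢 S) := by
  have himage : goodSet 𝒢 S = Prod.fst '' ({y : FullShift d × (ℤ → ℤ) |
      IsCenteredParsing 𝒢 y.1 y.2} ∩ {y | IsBlock S y.1 (y.2 0) (y.2 1)}) :=
    Set.Subset.antisymm (fun x ⟨p, hp⟩ => ⟨(x, p), hp, rfl⟩)
      (by rintro _ ⟨y, hy, rfl⟩; exact ⟨y.2, hy⟩)
  rw [himage]
  refine ((measurableSet_isCenteredParsing 𝒢).inter
    (measurableSet_isBlock_prod S 0 1)).image_of_measurable_injOn measurable_fst ?_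
  rintro ⟨x, p⟩ hp ⟨x', p'⟩ hp' (rfl : x = x')
  exact congrArg (Prod.mk x) (hp.1.eq hU hp'.1)

lemma measurableSet_Xseq (hU : UniqueRep 𝒢) : MeasurableSet (Xseq 𝒢) :=
  goodSet_self (𝒢 := 𝒢) ▸ measurableSet_goodSet hU 𝒢

lemma IsCenteredParsing.birkhoff_compl_goodSet (hU : UniqueRep 𝒢) (hp : IsCenteredParsing 𝒢 x p)
    (hS : ¬ IsBlock S x (p 0) (p 1)) {n : ℕ} (hn : n ≤ p 1) :
    birkhoff ((goodSet 𝒢 S)ᶜ.indicator 1) n x = n := by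
  have hmem : ∀ k ∈ Finset.range n,
      (goodSet 𝒢 S)ᶜ.indicator (1 : FullShift d → ℝ) ((shift d)^[k] x) = 1 := by
    intro k hk
    have hk : (k : ℤ) < n := by exact_mod_cast Finset.mem_range.1 hk
    refine Set.indicator_of_mem (Set.mem_compl fun h => hS ?_) 1
    rw [(hp.shift_iterate (hk.trans_le hn)).mem_goodSet_iff hU, isBlock_shift_iterate] at h
    simpa using h
  rw [birkhoff, Finset.sum_congr rfl hmem]
  simp

lemma birkhoff_indicator_one_nonneg (E : Set (FullShift d)) (n : ℕ) (x : FullShift d) :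
    0 ≤ birkhoff (E.indicator 1) n x :=
  Finset.sum_nonneg fun _ _ => Set.indicator_nonneg (fun _ _ => zero_le_one) _

lemma badCount_window_add_le {ψ : FullShift d → ℝ} {a b : ℝ} {m n : ℕ}
    (hm : badCount S (window x 0 m) ≤ birkhoff ψ m x + a)
    (hn : badCount S (window ((shift d)^[m] x) 0 n) ≤ birkhoff ψ n ((shift d)^[m] x) + b) :
    (badCount S (window x 0 (m + n)) : ℝ) ≤ birkhoff ψ (m + n) x + (a + b) := by
  have happend : (badCount S (window x 0 (m + n)) : ℝ) ≤
      badCount S (window x 0 m) + badCount S (window ((shift d)^[m] x) 0 n) := by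
    rw [window_add, window_shift_iterate]
    exact_mod_cast badCount_append_le S _ _
  have hsplit : birkhoff ψ (m + n) x = birkhoff ψ m x + birkhoff ψ n ((shift d)^[m] x) :=
    birkhoffSum_add (shift d) ψ m n x
  linarith

lemma IsCenteredParsing.badCount_window_le (hU : UniqueRep 𝒢) {ℓ : ℕ}
    (hℓ : ∀ g ∈ S, g.length ≤ ℓ) (hp : IsCenteredParsing 𝒢 x p) {n : ℕ} (hn : n ≤ p 1) :
    (badCount S (window x 0 n) : ℝ) ≤ birkhoff ((goodSet 𝒢 S)ᶜ.indicator 1) n x + ℓ := by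
  have hle : badCount S (window x 0 n) ≤ n := by simpa using badCount_le_length S (window x 0 n)
  have hB := birkhoff_indicator_one_nonneg (goodSet 𝒢 S)ᶜ n x
  by_cases hS : IsBlock S x (p 0) (p 1)
  · obtain ⟨g, hg, hpg, -⟩ := hS
    have hlen : badCount S (window x 0 n) ≤ ℓ := by
      have := hℓ g hg
      have := hp.2.1
      omega
    have : (badCount S (window x 0 n) : ℝ) ≤ ℓ := by exact_mod_cast hlen
    linarith
  · rw [hp.birkhoff_compl_goodSet hU hS hn]
    exact_mod_cast hle.trans le_self_add

lemma IsCenteredParsing.badCount_block_le (hU : UniqueRep 𝒢) (hp : IsCenteredParsing 𝒢 x p)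
    (h0 : p 0 = 0) {g : List (Fin d)} (hp1 : p 1 = g.length) (hg : window x 0 g.length = g) :
    (badCount S g : ℝ) ≤ birkhoff ((goodSet 𝒢 S)ᶜ.indicator 1) g.length x := by
  by_cases hgS : g ∈ S
  · rw [badCount_eq_zero hgS, Nat.cast_zero]
    exact birkhoff_indicator_one_nonneg _ _ _
  · rw [hp.birkhoff_compl_goodSet hU _ hp1.ge]
    · exact_mod_cast badCount_le_length S g
    · rintro ⟨g', hg', hlen, hw⟩
      obtain rfl : g' = g := by
        rw [← hw, h0, show g'.length = g.length by omega, hg]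
      exact hgS hg'

lemma IsCenteredParsing.badCount_window_le_of_cut (hU : UniqueRep 𝒢) {ℓ : ℕ}
    (hℓ : ∀ g ∈ S, g.length ≤ ℓ) (hp : IsCenteredParsing 𝒢 x p) (h0 : p 0 = 0) (n : ℕ) :
    (badCount S (window x 0 n) : ℝ) ≤ birkhoff ((goodSet 𝒢 S)ᶜ.indicator 1) n x + ℓ := by
  induction n using Nat.strong_induction_on generalizing x p with
  | _ n ih =>
    obtain ⟨g, -, hpg, hg⟩ := hp.isBlock
    rw [h0, zero_add] at hpg
    rw [h0] at hg
    rcases lt_or_ge n g.length with hn | hn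
    · exact hp.badCount_window_le hU hℓ (by omega)
    obtain ⟨r, rfl⟩ := Nat.exists_eq_add_of_le hn
    have hpos := hp.2.2
    rw [← zero_add (ℓ : ℝ)]
    refine badCount_window_add_le ?_ (ih r (by omega) (hp.next hpg) (by simp [hpg]))
    rw [hg, add_zero]
    exact hp.badCount_block_le hU h0 hpg hg

lemma badCount_window_le (hU : UniqueRep 𝒢) {ℓ : ℕ} (hℓ : ∀ g ∈ S, g.length ≤ ℓ)
    (hx : x ∈ Xseq 𝒢) (n : ℕ) : (badCount S (window x 0 n) : ℝ) ≤
      birkhoff ((goodSet 𝒢 S)ᶜ.indicator 1) n x + 2 * ℓ := by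
  obtain ⟨p, hp⟩ := exists_isCenteredParsing hx
  rcases le_or_gt (n : ℤ) (p 1) with hn | hn
  · have := hp.badCount_window_le hU hℓ hn
    have : (0 : ℝ) ≤ ℓ := ℓ.cast_nonneg
    linarith
  obtain ⟨r, hr⟩ := Int.eq_ofNat_of_zero_le hp.2.2.le
  obtain ⟨t, rfl⟩ := Nat.exists_eq_add_of_le (show r ≤ n by omega)
  have h := badCount_window_add_le (hp.badCount_window_le hU hℓ hr.ge)
    ((hp.next hr).badCount_window_le_of_cut hU hℓ (by simp [hr]) t)
  linarith

end Parsings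

/-! ### Distortion of Birkhoff sums -/

section Distortion

variable {d : ℕ} {ψ : FullShift d → ℝ} {K D : ℝ}

/-- Birkhoff sums of `ψ` over orbit segments with the same coding differ by at most `D`. -/
def HasDistortion (ψ : FullShift d → ℝ) (D : ℝ) : Prop :=
  ∀ (n : ℕ) (x y : FullShift d), window x 0 n = window y 0 n →
    |birkhoff ψ n x - birkhoff ψ n y| ≤ D

/-- The point obtained from `x` by replacing all letters outside of `[-M, M]` by `z`. Composing a
potential with `truncate z M` is a small perturbation for large `M` and gives it distortion. -/
def truncate (z : Fin d) (M : ℕ) (x : FullShift d) : FullShift d :=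
  fun i => if |i| ≤ M then x i else z

lemma continuous_truncate (z : Fin d) (M : ℕ) : Continuous (truncate z M) := by
  refine continuous_pi fun i => ?_
  simp only [truncate]
  split_ifs
  exacts [continuous_apply i, continuous_const]

lemma tendsto_truncate (z : Fin d) (x : FullShift d) :
    Tendsto (fun y : ℕ × FullShift d => truncate z y.1 y.2) (atTop ×ˢ 𝓝 x) (𝓝 x) := by
  refine tendsto_pi_nhds.2 fun i => Tendsto.congr' ?_ <|
    ((continuous_apply i).tendsto x).comp tendsto_snd
  filter_upwards [tendsto_fst.eventually (eventually_ge_atTop i.natAbs)] with y hy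
  have : |i| ≤ y.1 := by rw [Int.abs_eq_natAbs]; exact_mod_cast hy
  simp [truncate, this]

lemma tendstoUniformly_comp_truncate (z : Fin d) (hψ : Continuous ψ) :
    TendstoUniformly (fun M x => ψ (truncate z M x)) ψ atTop := by
  rw [← tendstoLocallyUniformly_iff_tendstoUniformly_of_compactSpace,
    tendstoLocallyUniformly_iff_forall_tendsto]
  refine fun x => Tendsto.mono_right ?_ (nhds_le_uniformity (ψ x))
  exact (((hψ.tendsto x).comp tendsto_snd).prodMk
    ((hψ.tendsto x).comp (tendsto_truncate z x))).trans nhds_prod_eq.ge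

lemma truncate_shift_iterate_eq (z : Fin d) {M n k : ℕ} {x y : FullShift d}
    (h : window x 0 n = window y 0 n) (hM : M ≤ k) (hk : k + M < n) :
    truncate z M ((shift d)^[k] x) = truncate z M ((shift d)^[k] y) := by
  ext i : 1
  simp only [truncate, shift_iterate]
  split_ifs with hi
  · rw [abs_le] at hi
    have := (window_eq_window_iff x y 0 0 n).1 h (i + k).toNat (by omega)
    rwa [Int.toNat_of_nonneg (by omega), zero_add] at this
  · rfl

lemma hasDistortion_truncate (z : Fin d) (M : ℕ) (hK : ∀ x, |ψ x| ≤ K) :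
    HasDistortion (fun x => ψ (truncate z M x)) (2 * M * (2 * K)) := by
  intro n x y hxy
  have hK0 : 0 ≤ K := (abs_nonneg _).trans (hK x)
  have hterm : ∀ k ∈ Finset.range n, |ψ (truncate z M ((shift d)^[k] x)) -
      ψ (truncate z M ((shift d)^[k] y))| ≤ if ¬ (M ≤ k ∧ k + M < n) then 2 * K else 0 := by
    intro k _
    by_cases h : M ≤ k ∧ k + M < n
    · simp [truncate_shift_iterate_eq z hxy h.1 h.2, h]
    · rw [if_pos h, two_mul]
      exact (abs_sub _ _).trans (add_le_add (hK _) (hK _))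
  have hcard : ((Finset.range n).filter fun k => ¬ (M ≤ k ∧ k + M < n)).card ≤ 2 * M := by
    refine (Finset.card_le_card (t := Finset.range M ∪ Finset.Ico (n - M) n) fun k hk => ?_).trans
      ((Finset.card_union_le _ _).trans ?_)
    · simp only [Finset.mem_filter, Finset.mem_range, Finset.mem_union, Finset.mem_Ico] at hk ⊢
      omega
    · rw [Finset.card_range, Nat.card_Ico]
      omega
  calc |birkhoff (fun x => ψ (truncate z M x)) n x - birkhoff (fun x => ψ (truncate z M x)) n y|
      ≤ ∑ k ∈ Finset.range n, if ¬ (M ≤ k ∧ k + M < n) then 2 * K else 0 := by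
        rw [birkhoff, birkhoff, ← Finset.sum_sub_distrib]
        exact (Finset.abs_sum_le_sum_abs _ _).trans (Finset.sum_le_sum hterm)
    _ ≤ 2 * M * (2 * K) := by
        rw [← Finset.sum_filter, Finset.sum_const, nsmul_eq_mul]
        exact mul_le_mul_of_nonneg_right (by exact_mod_cast hcard) (by positivity)

/-- The Birkhoff sum of `ψ` along the word `w`, evaluated at the point `fillWord z w`. -/
def wordSum (z : Fin d) (ψ : FullShift d → ℝ) (w : List (Fin d)) : ℝ :=
  birkhoff ψ w.length (fillWord z w)

lemma HasDistortion.nonneg (z : Fin d) (hD : HasDistortion ψ D) : 0 ≤ D :=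
  (abs_nonneg _).trans (hD 0 (fillWord z []) (fillWord z []) rfl)

lemma HasDistortion.abs_sub_wordSum_le (hD : HasDistortion ψ D) (z : Fin d) {w : List (Fin d)}
    {x : FullShift d} (hx : window x 0 w.length = w) :
    |birkhoff ψ w.length x - wordSum z ψ w| ≤ D :=
  hD _ _ _ (hx.trans (window_fillWord z w).symm)

lemma HasDistortion.isAlmostAdditive_wordSum (hD : HasDistortion ψ D) (z : Fin d) :
    IsAlmostAdditive (wordSum z ψ) (2 * D) := by
  intro u v
  have hwindow := window_fillWord z (u ++ v)
  rw [List.length_append, window_add] at hwindow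
  obtain ⟨hu, hv⟩ := List.append_inj hwindow (length_window _ _ _)
  rw [← window_shift_iterate] at hv
  have hu := abs_le.1 (hD.abs_sub_wordSum_le z hu)
  have hv := abs_le.1 (hD.abs_sub_wordSum_le z hv)
  have hadd : wordSum z ψ (u ++ v) = birkhoff ψ u.length (fillWord z (u ++ v)) +
      birkhoff ψ v.length ((shift d)^[u.length] (fillWord z (u ++ v))) := by
    rw [wordSum, List.length_append]
    exact birkhoffSum_add (shift d) ψ _ _ _
  rw [abs_le]
  constructor <;> linarith

lemma wordSum_singleton_le (z : Fin d) (hK : ∀ x, |ψ x| ≤ K) (a : Fin d) :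
    wordSum z ψ [a] ≤ K := by
  simpa [wordSum, birkhoff] using (le_abs_self _).trans (hK (fillWord z [a]))

variable {S : Language (Fin d)} {Q C θ : ℝ}

lemma HasDistortion.concatSum_wordSum_le (hD : HasDistortion ψ D) (z : Fin d) (hS : S.Nonempty)
    (hne : ∀ g ∈ S, g ≠ []) (hK : ∀ x, |ψ x| ≤ K) (hQ : pressure (codedShift S) ψ ≤ Q) (k : ℕ) :
    concatSum S (wordSum z ψ) k ≤ Real.exp (3 * D) * Real.exp (k * Q) := by
  have hD0 := hD.nonneg z
  refine (concatSum_le hS hne hK hD0 (by positivity) (by simp [wordSum, birkhoff])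
    (fun w x hx => ?_) (hD.isAlmostAdditive_wordSum z) k).trans ?_
  · have := (abs_le.1 (hD.abs_sub_wordSum_le z hx)).1
    linarith
  · rw [show D + 2 * D = 3 * D by ring]
    gcongr

lemma HasDistortion.log_patchedSum_le (hD : HasDistortion ψ D) (z : Fin d) (hS : S.Nonempty)
    (hne : ∀ g ∈ S, g ≠ []) (hK : ∀ x, |ψ x| ≤ K) (hQ : pressure (codedShift S) ψ ≤ Q)
    (hC : 0 ≤ C)
    (hθ : Real.exp (3 * D) * (d * Real.exp (K + 2 * (2 * D) - C)) * Real.exp (-Q) ≤ θ) (n : ℕ) :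
    Real.log (patchedSum S (wordSum z ψ) C n) ≤ 3 * D + n * Q + n * θ := by
  have hpos : 0 < patchedSum S (wordSum z ψ) C n :=
    Finset.sum_pos (fun _ _ => Real.exp_pos _) ⟨_, window_mem_words (fun _ => z) 0 n⟩
  refine (Real.log_le_iff_le_exp hpos).2 ((patchedSum_le (hD.isAlmostAdditive_wordSum z)
    (wordSum_singleton_le z hK) hC (hD.concatSum_wordSum_le z hS hne hK hQ) n).trans ?_)
  rw [Real.exp_add, Real.exp_add, Real.exp_nat_mul θ]
  gcongr
  linarith [Real.add_one_le_exp θ]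

end Distortion

/-! ### Free energy of measures on sequences of generators -/

section SequentialBound

variable {d : ℕ} {μ : Measure (FullShift d)} {ψ : FullShift d → ℝ} {D K Q C θ : ℝ}

lemma integrable_birkhoff (hinv : MeasurePreserving (shift d) μ μ) (hψ : Integrable ψ μ) (n : ℕ) :
    Integrable (birkhoff ψ n) μ :=
  integrable_finsetSum _ fun k _ => (hinv.iterate k).integrable_comp_of_integrable hψ

lemma integral_birkhoff (hinv : MeasurePreserving (shift d) μ μ) (hψ : Integrable ψ μ) (n : ℕ) :
    ∫ x, birkhoff ψ n x ∂μ = n * ∫ x, ψ x ∂μ := by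
  have hiterate : ∀ k, ∫ x, ψ ((shift d)^[k] x) ∂μ = ∫ x, ψ x ∂μ := fun k => by
    have hk := hinv.iterate k
    rw [← integral_map hk.aemeasurable (hk.map_eq.symm ▸ hψ.aestronglyMeasurable), hk.map_eq]
  have hint : ∀ k, Integrable (fun x => ψ ((shift d)^[k] x)) μ := fun k =>
    (hinv.iterate k).integrable_comp_of_integrable hψ
  simp only [birkhoff]
  rw [integral_finsetSum _ fun k _ => hint k, Finset.sum_congr rfl fun k _ => hiterate k]
  simp

variable [IsProbabilityMeasure μ] {𝒢 : Set (List (Fin d))} {S : Language (Fin d)} {ℓ : ℕ}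

lemma le_integral_wordSum_sub_badCount (hU : UniqueRep 𝒢) (hℓ : ∀ g ∈ S, g.length ≤ ℓ)
    (hψ : Continuous ψ) (hD : HasDistortion ψ D) (hC : 0 ≤ C)
    (hinv : MeasurePreserving (shift d) μ μ) (hμ : ∀ᵐ x ∂μ, x ∈ Xseq 𝒢) (z : Fin d) (n : ℕ) :
    n * ∫ x, ψ x ∂μ - C * (n * μ.real (goodSet 𝒢 S)ᶜ) - (D + C * (2 * ℓ)) ≤
      ∫ x, (wordSum z ψ (window x 0 n) - C * badCount S (window x 0 n)) ∂μ := by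
  set B := (goodSet 𝒢 S)ᶜ
  have hBm : MeasurableSet B := (measurableSet_goodSet hU S).compl
  have hBint : Integrable (B.indicator (1 : FullShift d → ℝ)) μ :=
    (integrable_const (1 : ℝ)).indicator hBm
  have hintψ := integrable_birkhoff hinv (integrable_of_continuous hψ) n
  have hintB := (integrable_birkhoff hinv hBint n).const_mul C
  have hint : Integrable (fun x => birkhoff ψ n x - C * birkhoff (B.indicator 1) n x) μ :=
    hintψ.sub hintB
  calc n * ∫ x, ψ x ∂μ - C * (n * μ.real B) - (D + C * (2 * ℓ))
      = ∫ x, (birkhoff ψ n x - C * birkhoff (B.indicator 1) n x - (D + C * (2 * ℓ))) ∂μ := by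
        rw [integral_sub hint (integrable_const _), integral_sub hintψ hintB,
          integral_const_mul, integral_birkhoff hinv (integrable_of_continuous hψ),
          integral_birkhoff hinv hBint, integral_indicator_one hBm, integral_const,
          probReal_univ, one_smul]
    _ ≤ _ := by
        refine integral_mono_ae (hint.sub (integrable_const _))
          (integrable_of_continuous
            (continuous_comp_window n fun w => wordSum z ψ w - C * badCount S w)) ?_
        filter_upwards [hμ] with x hx
        have hbad := mul_le_mul_of_nonneg_left (badCount_window_le hU hℓ hx n) hC
        have hsum := hD.abs_sub_wordSum_le z (w := window x 0 n) (x := x) (by rw [length_window])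
        rw [length_window, abs_le] at hsum
        linarith

lemma blockEnt_add_integral_le_of_hasDistortion (hU : UniqueRep 𝒢) (hS : S.Nonempty)
    (hne : ∀ g ∈ S, g ≠ []) (hℓ : ∀ g ∈ S, g.length ≤ ℓ) (hψ : Continuous ψ)
    (hK : ∀ x, |ψ x| ≤ K) (hD : HasDistortion ψ D) (hQ : pressure (codedShift S) ψ ≤ Q)
    (hC : 0 ≤ C)
    (hθ : Real.exp (3 * D) * (d * Real.exp (K + 2 * (2 * D) - C)) * Real.exp (-Q) ≤ θ)
    (hinv : MeasurePreserving (shift d) μ μ) (hμ : ∀ᵐ x ∂μ, x ∈ Xseq 𝒢) (n : ℕ) :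
    blockEnt μ n + n * ∫ x, ψ x ∂μ ≤
      n * (Q + θ + C * μ.real (goodSet 𝒢 S)ᶜ) + (4 * D + C * (2 * ℓ)) := by
  obtain ⟨g, hg⟩ := hS
  obtain ⟨z, -⟩ := List.exists_mem_of_ne_nil g (hne g hg)
  have hentropy := blockEnt_add_integral_le (μ := μ) n fun w => wordSum z ψ w - C * badCount S w
  have hintegral := le_integral_wordSum_sub_badCount hU hℓ hψ hD hC hinv hμ z n
  have hlog : Real.log (∑ w ∈ words d n, Real.exp (wordSum z ψ w - C * badCount S w)) ≤
      3 * D + n * Q + n * θ := hD.log_patchedSum_le z ⟨g, hg⟩ hne hK hQ hC hθ n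
  linarith

end SequentialBound

section Generators

variable {d : ℕ} {μ : Measure (FullShift d)} [IsProbabilityMeasure μ] {ψ : FullShift d → ℝ}
  {D Q η : ℝ} {G : ℕ → List (Fin d)}

lemma tendsto_real_compl_goodSet (hU : UniqueRep (Set.range G))
    (hμ : ∀ᵐ x ∂μ, x ∈ Xseq (Set.range G)) :
    Tendsto (fun m : ℕ => μ.real (goodSet (Set.range G) (G '' {i | i < m}))ᶜ) atTop (𝓝 0) := by
  have hmono : Monotone fun m : ℕ => goodSet (Set.range G) (G '' {i | i < m}) := fun a b hab =>
    goodSet_mono (Set.image_mono fun i (hi : i < a) => hi.trans_le hab)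
  have hunion : ⋃ m : ℕ, goodSet (Set.range G) (G '' {i | i < m}) = Xseq (Set.range G) := by
    rw [iUnion_goodSet, ← Set.image_iUnion, ← goodSet_self, ← Set.image_univ]
    congr 2
    exact Set.eq_univ_of_forall fun i => Set.mem_iUnion.2 ⟨i + 1, i.lt_succ_self⟩
  have hlim := tendsto_measure_iUnion_atTop (μ := μ) hmono
  rw [hunion, (prob_compl_eq_zero_iff (measurableSet_Xseq hU)).1 hμ] at hlim
  have hreal := ((ENNReal.tendsto_toReal ENNReal.one_ne_top).comp hlim).const_sub 1
  rw [ENNReal.toReal_one, sub_self] at hreal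
  exact hreal.congr fun m => (probReal_compl_eq_one_sub (measurableSet_goodSet hU _)).symm

lemma tendsto_mul_exp_sub_mul_atTop (a b c e : ℝ) :
    Tendsto (fun C => a * (b * Real.exp (c - C)) * e) atTop (𝓝 0) := by
  have hatBot : Tendsto (fun C => c - C) atTop atBot :=
    tendsto_const_nhds.add_atBot tendsto_neg_atTop_atBot
  simpa using (((Real.tendsto_exp_atBot.comp hatBot).const_mul b).const_mul a).mul_const e

lemma eventually_blockEnt_div_add_integral_le_of_hasDistortion (hG : ∀ m, G m ≠ [])
    (hU : UniqueRep (Set.range G)) (hψ : Continuous ψ) (hD : HasDistortion ψ D)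
    (hQ : ∀ m : ℕ, 0 < m → pressure (codedShift (G '' {i | i < m})) ψ ≤ Q)
    (hinv : MeasurePreserving (shift d) μ μ) (hμ : ∀ᵐ x ∂μ, x ∈ Xseq (Set.range G))
    (hη : 0 < η) : ∀ᶠ n : ℕ in atTop, blockEnt μ n / n + ∫ x, ψ x ∂μ ≤ Q + η := by
  obtain ⟨K, hK⟩ := exists_abs_le_of_continuous hψ
  obtain ⟨C, hCη, hC⟩ := (((tendsto_mul_exp_sub_mul_atTop (Real.exp (3 * D)) d (K + 2 * (2 * D))
    (Real.exp (-Q))).eventually_lt_const (show 0 < η / 3 by positivity)).and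
      (eventually_ge_atTop 0)).exists
  obtain ⟨m, hmη, hm⟩ : ∃ m : ℕ,
      C * μ.real (goodSet (Set.range G) (G '' {i | i < m}))ᶜ < η / 3 ∧ 0 < m := by
    have hlim := (tendsto_real_compl_goodSet hU hμ).const_mul C
    rw [mul_zero] at hlim
    exact ((hlim.eventually_lt_const (by positivity)).and (eventually_gt_atTop 0)).exists
  obtain ⟨ℓ, hℓ⟩ := (((Set.finite_lt_nat m).image G).image List.length).bddAbove
  set E := 4 * D + C * (2 * ℓ)
  have hlim : Tendsto (fun n : ℕ => E / n) atTop (𝓝 0) := tendsto_const_div_atTop_nhds_zero_nat E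
  filter_upwards [hlim.eventually_lt_const (show 0 < η / 3 by positivity), eventually_gt_atTop 0]
    with n hn hn0
  have hmain := blockEnt_add_integral_le_of_hasDistortion hU
    (S := G '' {i | i < m}) ⟨G 0, 0, hm, rfl⟩
    (by rintro _ ⟨i, -, rfl⟩; exact hG i) (fun g hg => hℓ (Set.mem_image_of_mem _ hg))
    hψ hK hD (hQ m hm) hC hCη.le hinv hμ n
  have hdiv : blockEnt μ n / n + ∫ x, ψ x ∂μ ≤
      Q + η / 3 + C * μ.real (goodSet (Set.range G) (G '' {i | i < m}))ᶜ + E / n := by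
    field_simp at hmain ⊢
    linarith
  linarith

lemma eventually_blockEnt_div_add_integral_le (hG : ∀ m, G m ≠ [])
    (hU : UniqueRep (Set.range G)) (hψ : Continuous ψ)
    (hQ : ∀ m : ℕ, 0 < m → pressure (codedShift (G '' {i | i < m})) ψ ≤ Q)
    (hinv : MeasurePreserving (shift d) μ μ) (hμ : ∀ᵐ x ∂μ, x ∈ Xseq (Set.range G))
    (hη : 0 < η) : ∀ᶠ n : ℕ in atTop, blockEnt μ n / n + ∫ x, ψ x ∂μ ≤ Q + η := by
  obtain ⟨z, -⟩ := List.exists_mem_of_ne_nil _ (hG 0)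
  obtain ⟨K, hK⟩ := exists_abs_le_of_continuous hψ
  obtain ⟨M, hM⟩ := (Metric.tendstoUniformly_iff.1 (tendstoUniformly_comp_truncate z hψ) (η / 3)
    (by positivity)).exists
  have hM : ∀ x, |ψ x - ψ (truncate z M x)| ≤ η / 3 := fun x => (hM x).le
  have hψ' : Continuous fun x => ψ (truncate z M x) := hψ.comp (continuous_truncate z M)
  have hQ' : ∀ m : ℕ, 0 < m →
      pressure (codedShift (G '' {i | i < m})) (fun x => ψ (truncate z M x)) ≤ Q + η / 3 := by
    intro m hm
    have hX := codedShift_nonempty (𝒢 := G '' {i | i < m})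
      (by rintro _ ⟨i, -, rfl⟩; exact hG i) ⟨G 0, 0, hm, rfl⟩
    refine (pressure_le_add subset_rfl hX mapsTo_shift_codedShift (fun x => hK _) hK
      fun x _ => ?_).trans (add_le_add_left (hQ m hm) _)
    linarith [(abs_le.1 (hM x)).1]
  have hintegral : ∫ x, ψ x ∂μ ≤ ∫ x, ψ (truncate z M x) ∂μ + η / 3 := by
    have hmono : ∫ x, ψ x ∂μ ≤ ∫ x, (ψ (truncate z M x) + η / 3) ∂μ :=
      integral_mono (integrable_of_continuous hψ)
        (integrable_of_continuous (hψ'.add continuous_const))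
        fun x => by linarith [(abs_le.1 (hM x)).2]
    rwa [integral_add (integrable_of_continuous hψ') (integrable_const _), integral_const,
      probReal_univ, one_smul] at hmono
  filter_upwards [eventually_blockEnt_div_add_integral_le_of_hasDistortion hG hU hψ'
    (hasDistortion_truncate z M hK) hQ' hinv hμ (show 0 < η / 3 by positivity)] with n hn
  linarith

end Generators

/-! ### The part of a measure off an invariant set -/

section Conditioning

open ProbabilityTheory

variable {Ω : Type*} [MeasurableSpace Ω] {μ : Measure Ω} {E : Set Ω}

lemma measurePreserving_cond {f : Ω → Ω} (hf : MeasurePreserving f μ μ) (hE : MeasurableSet E)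
    (hinv : f ⁻¹' E = E) : MeasurePreserving f (μ[|E]) (μ[|E]) := by
  have h := (hf.restrict_preimage hE).smul_measure (μ E)⁻¹
  rwa [hinv] at h

lemma measure_smul_cond_add_smul_cond_compl [IsFiniteMeasure μ] (hE : MeasurableSet E) :
    μ E • μ[|E] + μ Eᶜ • μ[|Eᶜ] = μ := by
  ext A
  simpa [mul_comm] using cond_add_cond_compl_eq hE μ (t := A)

lemma cond_compl_eq_self [IsProbabilityMeasure μ] (hE : MeasurableSet E) (h : μ E = 0) :
    μ[|Eᶜ] = μ := by
  have hcompl : μ Eᶜ = 1 := (prob_compl_eq_one_iff hE).2 h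
  simpa [h, hcompl] using measure_smul_cond_add_smul_cond_compl (μ := μ) hE

end Conditioning

section FreeEnergy

open ProbabilityTheory

variable {d : ℕ} {X Xs : Set (FullShift d)} {μ : Measure (FullShift d)} {φ ψ : FullShift d → ℝ}

lemma mem_invProb_of_ae [IsProbabilityMeasure μ] (hX : MeasurableSet X)
    (hinv : MeasurePreserving (shift d) μ μ) (h : ∀ᵐ x ∂μ, x ∈ X) : μ ∈ InvProb X :=
  ⟨inferInstance, hinv.map_eq, (prob_compl_eq_zero_iff hX).1 h⟩

lemma freeEnergy_le (hμ : μ ∈ InvProb X) (hψ : Continuous ψ) {K : ℝ} (hK : ∀ x, |ψ x| ≤ K) :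
    freeEnergy μ ψ ≤ Real.log d + K := by
  have := hμ.1
  have hintegral : ∫ x, ψ x ∂μ ≤ K := by
    simpa using integral_mono (μ := μ) (integrable_of_continuous hψ) (integrable_const K)
      fun x => (le_abs_self _).trans (hK x)
  exact add_le_add (mEnt_le_of_eventually (Eventually.of_forall blockEnt_div_le)) hintegral

lemma freeEnergy_congr (hX : MeasurableSet X) (hμ : μ ∈ InvProb X) (h : Set.EqOn φ ψ X) :
    freeEnergy μ φ = freeEnergy μ ψ := by
  have := hμ.1
  have hae : φ =ᵐ[μ] ψ :=
    measure_mono_null (Set.compl_subset_compl.2 h) ((prob_compl_eq_zero_iff hX).2 hμ.2.2)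
  rw [freeEnergy, freeEnergy, integral_congr_ae hae]

lemma StrictFSP.congr (hX : MeasurableSet X) (h : Set.EqOn φ ψ X) (hφ : StrictFSP X Xs φ) :
    StrictFSP X Xs ψ := by
  have hset : ∀ A : Set (FullShift d), {r | ∃ μ ∈ InvProb X, μ A = 1 ∧ r = freeEnergy μ φ} =
      {r | ∃ μ ∈ InvProb X, μ A = 1 ∧ r = freeEnergy μ ψ} := fun A => Set.ext fun r =>
    exists_congr fun μ => and_congr_right fun hμ => by rw [freeEnergy_congr hX hμ h]
  simpa only [StrictFSP, PlimOf, PseqOf, hset] using hφ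

lemma le_freeEnergy_of_eventually [IsProbabilityMeasure μ] {P : ℝ}
    (h : ∀ᶠ n : ℕ in atTop, P ≤ blockEnt μ n / n + ∫ x, ψ x ∂μ) : P ≤ freeEnergy μ ψ := by
  rw [freeEnergy, ← sub_le_iff_le_add]
  exact le_mEnt_of_eventually (h.mono fun n hn => sub_le_iff_le_add.2 hn)

lemma freeEnergy_le_of_eventually [IsProbabilityMeasure μ] {Q : ℝ}
    (h : ∀ᶠ n : ℕ in atTop, blockEnt μ n / n + ∫ x, ψ x ∂μ ≤ Q) : freeEnergy μ ψ ≤ Q := by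
  rw [freeEnergy, ← le_sub_iff_add_le]
  exact mEnt_le_of_eventually (h.mono fun n hn => le_sub_iff_add_le.2 hn)

lemma le_freeEnergy_of_convexCombination {μ₁ μ₂ : Measure (FullShift d)}
    [IsProbabilityMeasure μ₁] [IsProbabilityMeasure μ₂] {a b : ℝ≥0∞} (hab : a + b = 1)
    (hb : b ≠ 0) (hμ : a • μ₁ + b • μ₂ = μ) (hψ : Continuous ψ) {P : ℝ}
    (hP : ∀ᶠ n : ℕ in atTop, P ≤ blockEnt μ n / n + ∫ x, ψ x ∂μ)
    (h₁ : ∀ᶠ n : ℕ in atTop, blockEnt μ₁ n / n + ∫ x, ψ x ∂μ₁ ≤ P) : P ≤ freeEnergy μ₂ ψ := by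
  have ha_top : a ≠ ∞ := (le_self_add.trans_lt (hab ▸ ENNReal.one_lt_top)).ne
  have hb_top : b ≠ ∞ := (le_add_self.trans_lt (hab ▸ ENNReal.one_lt_top)).ne
  have hb_pos : 0 < b.toReal := ENNReal.toReal_pos hb hb_top
  have hab_real : a.toReal + b.toReal = 1 := by
    rw [← ENNReal.toReal_add ha_top hb_top, hab, ENNReal.toReal_one]
  have hintegral : ∫ x, ψ x ∂μ = a.toReal * ∫ x, ψ x ∂μ₁ + b.toReal * ∫ x, ψ x ∂μ₂ := by
    rw [← hμ, integral_add_measure ((integrable_of_continuous hψ).smul_measure ha_top)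
      ((integrable_of_continuous hψ).smul_measure hb_top), integral_smul_measure,
      integral_smul_measure, smul_eq_mul, smul_eq_mul]
  set c := Real.negMulLog a.toReal + Real.negMulLog b.toReal
  have hentropy : ∀ n : ℕ, blockEnt μ n ≤ a.toReal * blockEnt μ₁ n + b.toReal * blockEnt μ₂ n + c :=
    fun n => blockEnt_convexCombination_le ENNReal.toReal_nonneg ENNReal.toReal_nonneg fun w => by
      simp [← hμ, Measure.real, ENNReal.toReal_add, ENNReal.mul_ne_top, ha_top, hb_top]
  refine le_of_forall_pos_le_add fun δ hδ => ?_
  rw [← sub_le_iff_le_add]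
  refine le_freeEnergy_of_eventually ?_
  filter_upwards [hP, h₁, (tendsto_const_div_atTop_nhds_zero_nat c).eventually_lt_const
    (mul_pos hb_pos hδ)] with n hPn h₁n hcn
  have hentropy_div : blockEnt μ n / n ≤
      a.toReal * (blockEnt μ₁ n / n) + b.toReal * (blockEnt μ₂ n / n) + c / n := by
    simpa only [add_div, mul_div_assoc] using div_le_div_of_nonneg_right (hentropy n) n.cast_nonneg
  have h₁a := mul_le_mul_of_nonneg_left h₁n a.toReal_nonneg
  have hP_split : P = a.toReal * P + b.toReal * P := by rw [← add_mul, hab_real, one_mul]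
  refine le_of_mul_le_mul_left ?_ hb_pos
  linarith

lemma le_freeEnergy_cond_compl [IsProbabilityMeasure μ] {E : Set (FullShift d)}
    (hE : MeasurableSet E) (hEc : μ Eᶜ ≠ 0) (hψ : Continuous ψ) {P : ℝ}
    (hP : ∀ᶠ n : ℕ in atTop, P ≤ blockEnt μ n / n + ∫ x, ψ x ∂μ)
    (hsmall : μ E ≠ 0 → ∀ᶠ n : ℕ in atTop, blockEnt (μ[|E]) n / n + ∫ x, ψ x ∂μ[|E] ≤ P) :
    P ≤ freeEnergy (μ[|Eᶜ]) ψ := by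
  have := cond_isProbabilityMeasure hEc
  by_cases hE0 : μ E = 0
  · rw [cond_compl_eq_self hE hE0]
    exact le_freeEnergy_of_eventually hP
  · have := cond_isProbabilityMeasure hE0
    exact le_freeEnergy_of_convexCombination (prob_add_prob_compl hE) hEc
      (measure_smul_cond_add_smul_cond_compl hE) hψ hP (hsmall hE0)

lemma le_PlimOf (hX : MeasurableSet X) (hXs : MeasurableSet Xs) (hinvs : shift d ⁻¹' Xs = Xs)
    (hμ : μ ∈ InvProb X) (hXsc : μ Xsᶜ ≠ 0) (hψ : Continuous ψ) {P : ℝ}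
    (hP : P ≤ freeEnergy (μ[|Xsᶜ]) ψ) : P ≤ PlimOf X Xs ψ := by
  obtain ⟨hprob, hmap, hμX⟩ := hμ
  obtain ⟨K, hK⟩ := exists_abs_le_of_continuous hψ
  have := cond_isProbabilityMeasure hXsc
  have hae : ∀ᵐ x ∂μ[|Xsᶜ], x ∈ X :=
    cond_absolutelyContinuous.ae_le ((prob_compl_eq_zero_iff hX).2 hμX)
  have hinv : MeasurePreserving (shift d) (μ[|Xsᶜ]) (μ[|Xsᶜ]) :=
    measurePreserving_cond ⟨continuous_shift.measurable, hmap⟩ hXs.compl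
      (by rw [Set.preimage_compl, hinvs])
  refine hP.trans (le_csSup ⟨Real.log d + K, ?_⟩ ⟨_, mem_invProb_of_ae hX hinv hae, ?_, rfl⟩)
  · rintro _ ⟨ν, hν, -, rfl⟩
    exact freeEnergy_le hν hψ hK
  · exact (prob_compl_eq_zero_iff (hX.diff hXs)).1 (hae.and (ae_cond_mem hXs.compl))

end FreeEnergy

/-! ### Sequential pressure -/

section SequentialPressure

variable {d : ℕ}

lemma exists_continuous_eqOn {Y : Type*} [TopologicalSpace Y] [NormalSpace Y] {X : Set Y}
    (hX : IsClosed X) {φ : Y → ℝ} (hφ : ContinuousOn φ X) :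
    ∃ ψ : Y → ℝ, Continuous ψ ∧ Set.EqOn φ ψ X := by
  obtain ⟨ψ, hψ⟩ := ContinuousMap.exists_restrict_eq hX
    (⟨X.domRestrict φ, continuousOn_iff_continuous_domRestrict.1 hφ⟩ : C(X, ℝ))
  exact ⟨ψ, ψ.continuous, fun x hx => (DFunLike.congr_fun hψ ⟨x, hx⟩).symm⟩

lemma exists_invProb_Xseq {𝒢 : Set (List (Fin d))} (hne : ∀ g ∈ 𝒢, g ≠ []) (h : 𝒢.Nonempty) :
    ∃ μ ∈ InvProb (codedShift 𝒢), μ (Xseq 𝒢) = 1 := by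
  obtain ⟨x, hx, ℓ, hℓ, hper⟩ := exists_isPeriodicPt_mem_Xseq hne h
  set Y : Set (FullShift d) := Set.range fun k => (shift d)^[k] x
  have hfinite : Y.Finite := ((Set.finite_Iio ℓ).image fun k => (shift d)^[k] x).subset <| by
    rintro _ ⟨k, rfl⟩
    exact ⟨k % ℓ, k.mod_lt hℓ, hper.iterate_mod_apply k⟩
  have hinv : Set.MapsTo (shift d) Y Y := by
    rintro _ ⟨k, rfl⟩
    exact ⟨k + 1, Function.iterate_succ_apply' _ _ _⟩
  have hY : Y ⊆ Xseq 𝒢 := by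
    rintro _ ⟨k, rfl⟩
    exact (shift_iterate_mem_Xseq k).2 hx
  obtain ⟨μ, ⟨hμ, hmap, hμY⟩, -⟩ := exists_invProb_pressure_le (X := Y) ⟨x, 0, rfl⟩
    hfinite.isClosed hinv (ψ := 0) continuous_const
  have hfull : ∀ Z, Y ⊆ Z → μ Z = 1 := fun Z hZ => le_antisymm prob_le_one (hμY ▸ measure_mono hZ)
  exact ⟨μ, ⟨hμ, hmap, hfull _ (hY.trans subset_closure)⟩, hfull _ hY⟩

lemma pressure_codedShift_le_add {S T : Set (List (Fin d))} (hST : S ⊆ T)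
    (hne : ∀ g ∈ S, g ≠ []) (hS : S.Nonempty) {φ ψ : FullShift d → ℝ} {ε : ℝ}
    (hφ : ContinuousOn φ (codedShift T)) (hψ : ContinuousOn ψ (codedShift T))
    (h : ∀ x ∈ codedShift S, φ x ≤ ψ x + ε) :
    pressure (codedShift S) φ ≤ pressure (codedShift T) ψ + ε := by
  have hsub : codedShift S ⊆ codedShift T := codedShift_mono hST
  obtain ⟨φ', hφ', hφeq⟩ := exists_continuous_eqOn isClosed_closure hφ
  obtain ⟨ψ', hψ', hψeq⟩ := exists_continuous_eqOn isClosed_closure hψ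
  obtain ⟨K, hK⟩ := exists_abs_le_of_continuous hφ'
  obtain ⟨K', hK'⟩ := exists_abs_le_of_continuous hψ'
  rw [pressure_congr mapsTo_shift_codedShift (hφeq.mono hsub),
    pressure_congr mapsTo_shift_codedShift hψeq]
  refine pressure_le_add hsub (codedShift_nonempty hne hS) mapsTo_shift_codedShift hK hK'
    fun x hx => ?_
  rw [← hφeq (hsub hx), ← hψeq (hsub hx)]
  exact h x hx

variable {G : ℕ → List (Fin d)} {ψ : FullShift d → ℝ} {Q : ℝ}

lemma PseqOf_le (hG : ∀ m, G m ≠ []) (hU : UniqueRep (Set.range G)) (hψ : Continuous ψ)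
    (hQ : ∀ m : ℕ, 0 < m → pressure (codedShift (G '' {i | i < m})) ψ ≤ Q) :
    PseqOf (codedShift (Set.range G)) (Xseq (Set.range G)) ψ ≤ Q := by
  obtain ⟨ν, hν, hν_seq⟩ :=
    exists_invProb_Xseq (Set.forall_mem_range.2 hG) (Set.range_nonempty G)
  refine csSup_le ⟨_, ν, hν, hν_seq, rfl⟩ ?_
  rintro _ ⟨μ, ⟨hμ, hmap, -⟩, hμ_seq, rfl⟩
  refine le_of_forall_pos_le_add fun η hη => freeEnergy_le_of_eventually ?_
  exact eventually_blockEnt_div_add_integral_le hG hU hψ hQ ⟨continuous_shift.measurable, hmap⟩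
    ((prob_compl_eq_zero_iff (measurableSet_Xseq hU)).2 hμ_seq) hη

open ProbabilityTheory in
lemma pressure_le_PlimOf (hG : ∀ m, G m ≠ []) (hU : UniqueRep (Set.range G)) (hψ : Continuous ψ)
    (hQ : ∀ m : ℕ, 0 < m → pressure (codedShift (G '' {i | i < m})) ψ ≤ Q)
    (hlt : Q < pressure (codedShift (Set.range G)) ψ) :
    pressure (codedShift (Set.range G)) ψ ≤
      PlimOf (codedShift (Set.range G)) (Xseq (Set.range G)) ψ := by
  set X := codedShift (Set.range G)
  set E := Xseq (Set.range G)
  have hE : MeasurableSet E := measurableSet_Xseq hU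
  have hX : IsClosed X := isClosed_closure
  obtain ⟨μ, hμX, hμP⟩ := exists_invProb_pressure_le
    (codedShift_nonempty (Set.forall_mem_range.2 hG) (Set.range_nonempty G)) hX
    mapsTo_shift_codedShift hψ
  have hμ := hμX.1
  have hinv : MeasurePreserving (shift d) μ μ := ⟨continuous_shift.measurable, hμX.2.1⟩
  obtain ⟨η, hη, hηP⟩ : ∃ η, 0 < η ∧ Q + η < pressure X ψ :=
    ⟨(pressure X ψ - Q) / 2, by linarith, by linarith⟩
  have hEc : μ Eᶜ ≠ 0 := fun hμE => by
    obtain ⟨n, hn, hn0⟩ := ((eventually_blockEnt_div_add_integral_le hG hU hψ hQ hinv hμE hη).and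
      (eventually_gt_atTop 0)).exists
    exact ((hμP n hn0).trans hn).not_gt hηP
  refine le_PlimOf hX.measurableSet hE preimage_shift_Xseq hμX hEc hψ
    (le_freeEnergy_cond_compl hE hEc hψ ((eventually_gt_atTop 0).mono hμP) fun hE0 => ?_)
  have := cond_isProbabilityMeasure hE0
  exact (eventually_blockEnt_div_add_integral_le hG hU hψ hQ
    (measurePreserving_cond hinv hE preimage_shift_Xseq) (ae_cond_mem hE) hη).mono
    fun n hn => hn.trans hηP.le

lemma exists_pressure_lt_add (hG : ∀ m, G m ≠ []) (hU : UniqueRep (Set.range G))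
    (hψ : ContinuousOn ψ (codedShift (Set.range G)))
    (hstrict : StrictFSP (codedShift (Set.range G)) (Xseq (Set.range G)) ψ) {ε : ℝ}
    (hε : 0 < ε) : ∃ m : ℕ, 0 < m ∧ pressure (codedShift (Set.range G)) ψ <
      pressure (codedShift (G '' {i | i < m})) ψ + ε := by
  have hX : IsClosed (codedShift (Set.range G)) := isClosed_closure
  obtain ⟨ψ', hψ', heq⟩ := exists_continuous_eqOn hX hψ
  by_contra! hcon
  rw [pressure_congr mapsTo_shift_codedShift heq] at hcon
  have hQ : ∀ m : ℕ, 0 < m → pressure (codedShift (G '' {i | i < m})) ψ' ≤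
      pressure (codedShift (Set.range G)) ψ' - ε := fun m hm => by
    rw [← pressure_congr mapsTo_shift_codedShift
      (heq.mono (codedShift_mono (Set.image_subset_range _ _)))]
    exact le_sub_iff_add_le.2 (hcon m hm)
  have hstrict' : PlimOf _ _ ψ' < PseqOf _ _ ψ' := hstrict.congr hX.measurableSet heq
  have hseq := PseqOf_le hG hU hψ' hQ
  have hlim := pressure_le_PlimOf hG hU hψ' hQ (sub_lt_self _ hε)
  linarith

end SequentialPressure

/-- for a coded shift with unique representation and `φ ∈ FSSP(X)`,
the pressure is the limit of the pressures of the finitely generated approximations. -/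
theorem statement2 {d : ℕ} (hd : 2 ≤ d) (G : ℕ → List (Fin d)) (hG : ∀ m, G m ≠ [])
    (hU : UniqueRep (Set.range G)) (φ : FullShift d → ℝ)
    (hφ : ContinuousOn φ (codedShift (Set.range G)))
    (hFSSP : InFSSP (codedShift (Set.range G)) (Xseq (Set.range G)) φ) :
    Tendsto (fun m : ℕ => pressure (codedShift (G '' {i | i < m})) φ) atTop
      (𝓝 (pressure (codedShift (Set.range G)) φ)) := by
  refine Metric.tendsto_atTop.2 fun ε hε => ?_
  obtain ⟨ψ, hψ, hclose, hstrict⟩ := hFSSP (ε / 3) (by positivity)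
  obtain ⟨m, hm, hlt⟩ := exists_pressure_lt_add hG hU hψ hstrict (ε := ε / 3) (by positivity)
  refine ⟨m, fun n hmn => ?_⟩
  set S : ℕ → Set (List (Fin d)) := fun k => G '' {i | i < k}
  have hS : ∀ k, S k ⊆ Set.range G := fun k => Set.image_subset_range _ _
  have hne : ∀ k, ∀ g ∈ S k, g ≠ [] := fun k => Set.forall_mem_image.2 fun i _ => hG i
  have hφψ :
      pressure (codedShift (Set.range G)) φ ≤ pressure (codedShift (Set.range G)) ψ + ε / 3 :=
    pressure_codedShift_le_add subset_rfl (Set.forall_mem_range.2 hG) (Set.range_nonempty G) hφ hψ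
      fun x hx => by linarith [(abs_le.1 (hclose x hx)).2]
  have hψφ : pressure (codedShift (S m)) ψ ≤ pressure (codedShift (S n)) φ + ε / 3 :=
    pressure_codedShift_le_add (Set.image_mono fun i (hi : i < m) => hi.trans_le hmn)
      (hne m) ⟨G 0, 0, hm, rfl⟩ (hψ.mono (codedShift_mono (hS n)))
      (hφ.mono (codedShift_mono (hS n)))
      fun x hx => by linarith [(abs_le.1 (hclose x (codedShift_mono (hS m) hx))).1]
  have hmono : pressure (codedShift (S n)) φ ≤ pressure (codedShift (Set.range G)) φ + 0 :=
    pressure_codedShift_le_add (hS n) (hne n) ⟨G 0, 0, hm.trans_le hmn, rfl⟩ hφ hφ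
      fun x _ => (add_zero _).ge
  rw [Real.dist_eq, abs_lt]
  constructor <;> linarith

end PaperStmt
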